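/- For every two convex bodies K and L in R^m (m ≥ 2), the volume of their Blaschke sum does not exceed the volume of their Minkowski sum: Vol(K # L) ≤ Vol(K + L). -/

import Mathlib

open MeasureTheory Set
open scoped ENNReal Pointwise RealInnerProductSpace Topology

noncomputable section

abbrev Euc (m : ℕ) : Type := EuclideanSpace ℝ (Fin m)

/-- A convex body: compact convex set with nonempty interior. -/
def IsConvexBody {m : ℕ} (K : Set (Euc m)) : Prop :=
  Convex ℝ K ∧ IsCompact K ∧ (interior K).Nonempty

/-- A (compact convex) polytope: convex hull of a finite set. -/
def IsPolytope {m : ℕ} (P : Set (Euc m)) : Prop :=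
  ∃ s : Finset (Euc m), P = convexHull ℝ (s : Set (Euc m))

def unitSphere (m : ℕ) : Set (Euc m) := Metric.sphere 0 1

/-- `n` is an outward unit normal to `K` at the boundary point `x`. -/
def IsOutwardNormalAt {m : ℕ} (K : Set (Euc m)) (x n : Euc m) : Prop :=
  x ∈ frontier K ∧ ‖n‖ = 1 ∧ ∀ y ∈ K, ⟪y - x, n⟫ ≤ 0

open Classical in
/-- The (set-valued choice of) Gauss map of `K`. -/
def gaussMap {m : ℕ} (K : Set (Euc m)) (x : Euc m) : Euc m :=
  if h : ∃ n, IsOutwardNormalAt K x n then h.choose else 0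

/-- The surface area measure of `K`: the pushforward under the Gauss map of the
`(m-1)`-dimensional Hausdorff measure on the boundary of `K`. -/
def surfMeasure {m : ℕ} (K : Set (Euc m)) : Measure (Euc m) :=
  Measure.map (gaussMap K) (μH[(m : ℝ) - 1].restrict (frontier K))

/-- The face of `P` in direction `n`. -/
def faceIn {m : ℕ} (P : Set (Euc m)) (n : Euc m) : Set (Euc m) :=
  {x ∈ P | ∀ y ∈ P, ⟪y, n⟫ ≤ ⟪x, n⟫}

/-- The `(m-1)`-dimensional volume of the face of `P` in direction `n`. -/
def faceArea {m : ℕ} (P : Set (Euc m)) (n : Euc m) : ℝ≥0∞ :=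
  μH[(m : ℝ) - 1] (faceIn P n)

/-- `n` is the outward unit normal to a facet ((m-1)-dimensional face) of `P`. -/
def IsFacetNormal {m : ℕ} (P : Set (Euc m)) (n : Euc m) : Prop :=
  ‖n‖ = 1 ∧ 0 < faceArea P n

/-!
The Blaschke sum `M` is characterised by its surface area measure, the Minkowski sum `K + L` by its
support function; the two are linked by the first variation `∫ h_N dS_K`, the right derivative at
`0` of `vol (K + t N)`, which is additive in `K` with respect to Blaschke sums. With `N = K + L` and
`m` the dimension, Minkowski's first inequality gives
`m vol(M)^((m-1)/m) vol(N)^(1/m) ≤ ∫ h_N dS_M = ∫ h_N dS_K + ∫ h_N dS_L`,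
so everything reduces to `∫ h_N dS_K + ∫ h_N dS_L ≤ m vol(N)`.

This is the derivative at `t = 0` of the inequality
`vol(K + tN) + vol(L + tN) + vol(N) ≤ vol(K) + vol(L) + ((1 + t)^m + t^m) vol(N)`.
The gradient `∇ log ∫_K exp ⟨p, x⟩ dx` of a log-Laplace transform maps the space of all `p` into
`K`, and the combination `a ∇Λ_K + b ∇Λ_L` of two such maps is a change of variables onto
`a K + b L` up to a null set. Its Jacobian determinant is `det (a C_K + b C_L)` with positive
semidefinite covariance matrices, so the volume inequality follows from the determinant inequality
for `A` and `B` in place of `K` and `L`.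
-/

section PrekopaLeindler

theorem real_volume_add_le_of_isCompact {A B : Set ℝ} (hA : IsCompact A) (hB : IsCompact B)
    (hA' : A.Nonempty) (hB' : B.Nonempty) : volume A + volume B ≤ volume (A + B) := by
  obtain ⟨a, ha, hmax⟩ := hA.exists_isGreatest hA'
  obtain ⟨b, hb, hmin⟩ := hB.exists_isLeast hB'
  have hinter : volume ((· + b) '' A ∩ (a + ·) '' B) = 0 := by
    refine measure_mono_null (t := {a + b}) ?_ (by simp)
    rintro z ⟨⟨x, hx, rfl⟩, y, hy, hxy : a + y = x + b⟩
    have := hmax hx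
    have := hmin hy
    change x + b = a + b
    linarith
  calc volume A + volume B = volume ((· + b) '' A) + volume ((a + ·) '' B) := by simp
    _ = volume ((· + b) '' A ∪ (a + ·) '' B) := by
      rw [← measure_union_add_inter _ (hB.image (by fun_prop)).measurableSet, hinter, add_zero]
    _ ≤ volume (A + B) := measure_mono <| union_subset
      (image_subset_iff.2 fun _ hx => add_mem_add hx hb)
      (image_subset_iff.2 fun _ hy => add_mem_add ha hy)

theorem real_volume_add_le {A B : Set ℝ} (hA : MeasurableSet A) (hB : MeasurableSet B)
    (hA' : A.Nonempty) (hB' : B.Nonempty) : volume A + volume B ≤ volume (A + B) := by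
  obtain ⟨a, ha⟩ := hA'
  obtain ⟨b, hb⟩ := hB'
  rw [hA.measure_eq_iSup_isCompact, hB.measure_eq_iSup_isCompact]
  simp only [iSup_and']
  refine ENNReal.biSup_add_biSup_le' ⟨∅, by simp⟩ ⟨∅, by simp⟩ fun S hS T hT => ?_
  calc volume S + volume T ≤ volume (insert a S) + volume (insert b T) := by
        gcongr <;> exact subset_insert _ _
    _ ≤ volume (insert a S + insert b T) := real_volume_add_le_of_isCompact (hS.2.insert a)
        (hT.2.insert b) (insert_nonempty a S) (insert_nonempty b T)
    _ ≤ volume (A + B) := by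
        gcongr
        exacts [insert_subset ha hS.1, insert_subset hb hT.1]

theorem ennreal_rpow_mul_rpow_le_add {a b : ℝ} (ha : 0 < a) (hb : 0 < b) (hab : a + b = 1)
    (x y : ℝ≥0∞) : x ^ a * y ^ b ≤ ENNReal.ofReal a * x + ENNReal.ofReal b * y := by
  simpa [← ENNReal.rpow_mul, ha.ne', hb.ne', ENNReal.div_eq_inv_mul, ENNReal.ofReal_inv_of_pos, ha,
    hb] using ENNReal.young_inequality (x ^ a) (y ^ b) (.inv_inv ha hb hab)

theorem lintegral_eq_lintegral_measure_ofReal_lt {α : Type*} [MeasurableSpace α] (μ : Measure α)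
    {f : α → ℝ≥0∞} (hf : Measurable f) (hf' : ∀ x, f x ≠ ∞) :
    ∫⁻ x, f x ∂μ = ∫⁻ t in Ioi (0 : ℝ), μ {x | ENNReal.ofReal t < f x} := by
  have h := lintegral_eq_lintegral_meas_lt μ (f := fun x => (f x).toReal)
    (.of_forall fun x => ENNReal.toReal_nonneg) hf.ennreal_toReal.aemeasurable
  simp only [ENNReal.ofReal_toReal (hf' _)] at h
  rw [h]
  refine setLIntegral_congr_fun measurableSet_Ioi fun t ht => ?_
  simp only [ENNReal.ofReal_lt_iff_lt_toReal (le_of_lt ht) (hf' _)]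

variable {a b : ℝ}

theorem real_smul_volume_add_smul_volume_le (ha : 0 < a) (hb : 0 < b) {A B C : Set ℝ}
    (hA : MeasurableSet A) (hB : MeasurableSet B) (hA' : A.Nonempty) (hB' : B.Nonempty)
    (hC : a • A + b • B ⊆ C) :
    ENNReal.ofReal a * volume A + ENNReal.ofReal b * volume B ≤ volume C := by
  calc ENNReal.ofReal a * volume A + ENNReal.ofReal b * volume B
      = volume (a • A) + volume (b • B) := by
        simp [Measure.addHaar_smul, abs_of_pos ha, abs_of_pos hb]
    _ ≤ volume (a • A + b • B) := real_volume_add_le (hA.const_smul₀ a) (hB.const_smul₀ b)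
        hA'.smul_set hB'.smul_set
    _ ≤ volume C := measure_mono hC

theorem superlevel_add_subset (ha : 0 < a) (hb : 0 < b) (hab : a + b = 1) {f g h : ℝ → ℝ≥0∞}
    (H : ∀ x y, f x ^ a * g y ^ b ≤ h (a * x + b * y)) (c : ℝ≥0∞) :
    a • {x | c < f x} + b • {x | c < g x} ⊆ {x | c < h x} := by
  rintro _ ⟨_, ⟨x, hx, rfl⟩, _, ⟨y, hy, rfl⟩, rfl⟩
  refine lt_of_lt_of_le ?_ (H x y)
  calc c = c ^ a * c ^ b := by
        rw [← ENNReal.rpow_add_of_nonneg _ _ ha.le hb.le, hab, ENNReal.rpow_one]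
    _ < f x ^ a * g y ^ b :=
        ENNReal.mul_lt_mul (ENNReal.rpow_lt_rpow hx ha) (ENNReal.rpow_lt_rpow hy hb)

theorem lintegral_add_lintegral_le_of_iSup_eq_one (ha : 0 < a) (hb : 0 < b) (hab : a + b = 1)
    {f g h : ℝ → ℝ≥0∞} (hf : Measurable f) (hg : Measurable g) (hh : Measurable h)
    (hf1 : ⨆ x, f x = 1) (hg1 : ⨆ x, g x = 1)
    (H : ∀ x y, f x ^ a * g y ^ b ≤ h (a * x + b * y)) :
    ENNReal.ofReal a * (∫⁻ x, f x) + ENNReal.ofReal b * (∫⁻ x, g x) ≤ ∫⁻ x, h x := by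
  have hf_le (x) : f x ≤ 1 := hf1 ▸ le_iSup f x
  have hg_le (x) : g x ≤ 1 := hg1 ▸ le_iSup g x
  have hmin (x y) : f x ^ a * g y ^ b ≤ min (h (a * x + b * y)) 1 :=
    le_min (H x y) (mul_le_one' (ENNReal.rpow_le_one (hf_le x) ha.le)
      (ENNReal.rpow_le_one (hg_le y) hb.le))
  refine le_trans ?_ (lintegral_mono fun x => min_le_left (h x) 1)
  rw [lintegral_eq_lintegral_measure_ofReal_lt _ hf
      fun x => ne_top_of_le_ne_top (by simp) (hf_le x),
    lintegral_eq_lintegral_measure_ofReal_lt _ hg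
      fun x => ne_top_of_le_ne_top (by simp) (hg_le x),
    lintegral_eq_lintegral_measure_ofReal_lt _ (hh.min measurable_const)
      fun x => ne_top_of_le_ne_top (by simp) (min_le_right _ _),
    ← lintegral_const_mul' _ _ (by simp), ← lintegral_const_mul' _ _ (by simp)]
  have hanti : Antitone fun t : ℝ => volume {x | ENNReal.ofReal t < g x} := fun s t hst =>
    measure_mono fun x hx => (ENNReal.ofReal_le_ofReal hst).trans_lt hx
  rw [← lintegral_add_right _ (hanti.measurable.const_mul _)]
  refine setLIntegral_mono' measurableSet_Ioi fun t _ => ?_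
  rcases le_or_gt 1 (ENNReal.ofReal t) with ht | ht
  · have hempty {k : ℝ → ℝ≥0∞} (hk : ∀ x, k x ≤ 1) : {x | ENNReal.ofReal t < k x} = ∅ :=
      eq_empty_of_forall_notMem fun x hx => (hx.trans_le (hk x)).not_ge ht
    simp [hempty hf_le, hempty hg_le]
  · exact real_smul_volume_add_smul_volume_le ha hb (measurableSet_lt measurable_const hf)
      (measurableSet_lt measurable_const hg) (by rwa [← hf1, lt_iSup_iff] at ht)
      (by rwa [← hg1, lt_iSup_iff] at ht)
      (superlevel_add_subset ha hb hab hmin _)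

theorem prekopa_leindler_real_of_bounded (ha : 0 < a) (hb : 0 < b) (hab : a + b = 1)
    {f g h : ℝ → ℝ≥0∞} (hf : Measurable f) (hg : Measurable g) (hh : Measurable h)
    (hf' : ⨆ x, f x ≠ ∞) (hg' : ⨆ x, g x ≠ ∞)
    (H : ∀ x y, f x ^ a * g y ^ b ≤ h (a * x + b * y)) :
    (∫⁻ x, f x) ^ a * (∫⁻ x, g x) ^ b ≤ ∫⁻ x, h x := by
  set F := ⨆ x, f x with hF
  set G := ⨆ x, g x with hG
  rcases eq_or_ne F 0 with hF0 | hF0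
  · simp [ENNReal.iSup_eq_zero.1 hF0, ha]
  rcases eq_or_ne G 0 with hG0 | hG0
  · simp [ENNReal.iSup_eq_zero.1 hG0, hb]
  set c := F⁻¹ ^ a * G⁻¹ ^ b with hc
  have hc0 : c ≠ 0 := by simp [hc, hf', hg', hF0, hG0]
  have hc_top : c ≠ ∞ := ENNReal.mul_ne_top (by simp [ha.le, hF0]) (by simp [hb.le, hG0])
  have hscale (x y : ℝ≥0∞) : (F⁻¹ * x) ^ a * (G⁻¹ * y) ^ b = c * (x ^ a * y ^ b) := by
    rw [ENNReal.mul_rpow_of_nonneg _ _ ha.le, ENNReal.mul_rpow_of_nonneg _ _ hb.le,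
      mul_mul_mul_comm]
  have key := (ennreal_rpow_mul_rpow_le_add ha hb hab _ _).trans <|
    lintegral_add_lintegral_le_of_iSup_eq_one ha hb hab
      (hf.const_mul F⁻¹) (hg.const_mul G⁻¹) (hh.const_mul c)
      (by rw [← ENNReal.mul_iSup, ← hF, ENNReal.inv_mul_cancel hF0 hf'])
      (by rw [← ENNReal.mul_iSup, ← hG, ENNReal.inv_mul_cancel hG0 hg'])
      (fun x y => (hscale _ _).trans_le (mul_le_mul_right (H x y) _))
  rw [lintegral_const_mul _ hf, lintegral_const_mul _ hg, lintegral_const_mul _ hh, hscale] at key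
  exact (ENNReal.mul_le_mul_iff_right hc0 hc_top).1 key

theorem tendsto_lintegral_min_natCast {α : Type*} [MeasurableSpace α] (μ : Measure α)
    {f : α → ℝ≥0∞} (hf : Measurable f) :
    Filter.Tendsto (fun n : ℕ => ∫⁻ x, min (f x) n ∂μ) Filter.atTop (𝓝 (∫⁻ x, f x ∂μ)) := by
  refine lintegral_tendsto_of_tendsto_of_monotone
    (fun n => (hf.min measurable_const).aemeasurable) (.of_forall fun x n k hnk => ?_)
    (.of_forall fun x => ?_)
  · exact min_le_min_left _ (by exact_mod_cast hnk)
  · simpa using (tendsto_const_nhds (x := f x)).min ENNReal.tendsto_nat_nhds_top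

theorem prekopa_leindler_real (ha : 0 < a) (hb : 0 < b) (hab : a + b = 1) {f g h : ℝ → ℝ≥0∞}
    (hf : Measurable f) (hg : Measurable g) (hh : Measurable h)
    (H : ∀ x y, f x ^ a * g y ^ b ≤ h (a * x + b * y)) :
    (∫⁻ x, f x) ^ a * (∫⁻ x, g x) ^ b ≤ ∫⁻ x, h x := by
  rcases eq_or_ne (∫⁻ x, f x) 0 with hf0 | hf0
  · simp [hf0, ha]
  rcases eq_or_ne (∫⁻ x, g x) 0 with hg0 | hg0
  · simp [hg0, hb]
  have hbdd (k : ℝ → ℝ≥0∞) (n : ℕ) : ⨆ x, min (k x) (n : ℝ≥0∞) ≠ ∞ :=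
    ne_top_of_le_ne_top (ENNReal.natCast_ne_top n) (iSup_le fun x => min_le_right _ _)
  have htrunc (n : ℕ) : (∫⁻ x, min (f x) n) ^ a * (∫⁻ x, min (g x) n) ^ b ≤ ∫⁻ x, h x := by
    refine prekopa_leindler_real_of_bounded ha hb hab (hf.min measurable_const)
      (hg.min measurable_const) hh (hbdd f n) (hbdd g n) fun x y => le_trans ?_ (H x y)
    gcongr <;> exact min_le_left _ _
  refine le_of_tendsto (ENNReal.Tendsto.mul
    ((ENNReal.continuous_rpow_const.tendsto _).comp (tendsto_lintegral_min_natCast volume hf))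
    (.inl ?_)
    ((ENNReal.continuous_rpow_const.tendsto _).comp (tendsto_lintegral_min_natCast volume hg))
    (.inl ?_)) (.of_forall htrunc)
  · simp [hf0, ha.not_gt]
  · simp [hg0, hb.not_gt]

theorem measurable_finCons {n : ℕ} :
    Measurable fun p : ℝ × (Fin n → ℝ) => (Fin.cons p.1 p.2 : Fin (n + 1) → ℝ) := by
  refine measurable_pi_iff.2 (Fin.cases ?_ fun j => ?_) <;> simp only [Fin.cons_zero, Fin.cons_succ]
    <;> fun_prop

theorem lintegral_fin_succ_eq {n : ℕ} {f : (Fin (n + 1) → ℝ) → ℝ≥0∞} (hf : Measurable f) :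
    ∫⁻ x, f x = ∫⁻ r : ℝ, ∫⁻ q : Fin n → ℝ, f (Fin.cons r q) := by
  rw [← (volume_preserving_piFinSuccAbove (fun _ : Fin (n + 1) => ℝ) 0).symm.lintegral_comp hf,
    Measure.volume_eq_prod, lintegral_prod]
  · simp [MeasurableEquiv.piFinSuccAbove, Fin.insertNthEquiv]
  · exact (hf.comp (MeasurableEquiv.measurable _)).aemeasurable

theorem prekopa_leindler {n : ℕ} (ha : 0 < a) (hb : 0 < b) (hab : a + b = 1)
    {f g h : (Fin n → ℝ) → ℝ≥0∞} (hf : Measurable f) (hg : Measurable g) (hh : Measurable h)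
    (H : ∀ x y, f x ^ a * g y ^ b ≤ h (a • x + b • y)) :
    (∫⁻ x, f x) ^ a * (∫⁻ x, g x) ^ b ≤ ∫⁻ x, h x := by
  induction n with
  | zero =>
    rw [volume_pi, Measure.pi_of_empty _ 0]
    simpa using H 0 0
  | succ n ih =>
    have hmeas {k : (Fin (n + 1) → ℝ) → ℝ≥0∞} (hk : Measurable k) (r : ℝ) :
        Measurable fun q : Fin n → ℝ => k (Fin.cons r q) :=
      hk.comp (measurable_finCons.comp measurable_prodMk_left)
    rw [lintegral_fin_succ_eq hf, lintegral_fin_succ_eq hg, lintegral_fin_succ_eq hh]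
    refine prekopa_leindler_real ha hb hab (hf.comp measurable_finCons).lintegral_prod_right'
      (hg.comp measurable_finCons).lintegral_prod_right'
      (hh.comp measurable_finCons).lintegral_prod_right' fun x y => ?_
    refine ih (hmeas hf x) (hmeas hg y) (hmeas hh _) fun p q => (H _ _).trans_eq ?_
    congr 1
    ext i
    refine Fin.cases ?_ (fun j => ?_) i <;> simp

theorem volume_rpow_mul_volume_rpow_le {n : ℕ} (ha : 0 < a) (hb : 0 < b) (hab : a + b = 1)
    {A B : Set (Euc n)} (hA : IsCompact A) (hB : IsCompact B) :
    volume A ^ a * volume B ^ b ≤ volume (a • A + b • B) := by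
  have hvol {S : Set (Euc n)} (hS : IsCompact S) :
      volume S = ∫⁻ x : Fin n → ℝ, S.indicator 1 (WithLp.toLp 2 x) := by
    rw [(PiLp.volume_preserving_toLp (Fin n)).lintegral_comp
      (measurable_one.indicator hS.measurableSet), lintegral_indicator_one hS.measurableSet]
  have hmeas {S : Set (Euc n)} (hS : IsCompact S) :
      Measurable fun x : Fin n → ℝ => S.indicator (1 : Euc n → ℝ≥0∞) (WithLp.toLp 2 x) :=
    (measurable_one.indicator hS.measurableSet).comp
      (PiLp.volume_preserving_toLp (Fin n)).measurable
  have hC : IsCompact (a • A + b • B) := (hA.smul _).add (hB.smul _)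
  rw [hvol hA, hvol hB, hvol hC]
  refine prekopa_leindler ha hb hab (hmeas hA) (hmeas hB) (hmeas hC) fun x y => ?_
  by_cases hx : WithLp.toLp 2 x ∈ A
  · by_cases hy : WithLp.toLp 2 y ∈ B
    · have : WithLp.toLp 2 (a • x + b • y) ∈ a • A + b • B :=
        add_mem_add (smul_mem_smul_set hx) (smul_mem_smul_set hy)
      simp [-WithLp.toLp_add, hx, hy, this]
    · simp [hy, hb]
  · simp [hx, ha]

end PrekopaLeindler

section ProductInequality

variable {ι R : Type*} [CommRing R] [LinearOrder R] [IsStrictOrderedRing R]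
  (s : Finset ι) {x y : ι → R} {t : R}

theorem prod_add_mul_add_le (hx : ∀ i, 0 ≤ x i) (hy : ∀ i, 0 ≤ y i) (ht : 0 ≤ t) :
    ∏ i ∈ s, (x i + t * (x i + y i)) ≤
      ∏ i ∈ s, x i + ((1 + t) ^ s.card - 1) * ∏ i ∈ s, (x i + y i) := by
  induction s using Finset.cons_induction with
  | empty => simp
  | cons i s hi ih =>
    have hpow : 1 ≤ (1 + t) ^ s.card := one_le_pow₀ (by linarith)
    have hprod : ∏ j ∈ s, x j ≤ ∏ j ∈ s, (x j + y j) :=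
      Finset.prod_le_prod (fun j _ => hx j) fun j _ => le_add_of_nonneg_right (hy j)
    have hX : 0 ≤ ∏ j ∈ s, x j := Finset.prod_nonneg fun j _ => hx j
    rw [Finset.prod_cons, Finset.prod_cons, Finset.prod_cons, Finset.card_cons, pow_succ]
    set X := ∏ j ∈ s, x j
    set Z := ∏ j ∈ s, (x j + y j)
    set q := (1 + t) ^ s.card
    have hz : 0 ≤ x i + y i := add_nonneg (hx i) (hy i)
    calc (x i + t * (x i + y i)) * ∏ j ∈ s, (x j + t * (x j + y j))
        ≤ (x i + t * (x i + y i)) * (X + (q - 1) * Z) := by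
          gcongr
          exact add_nonneg (hx i) (mul_nonneg ht hz)
      _ = x i * X + t * (x i + y i) * X + (x i + t * (x i + y i)) * ((q - 1) * Z) := by ring
      _ ≤ x i * X + t * (x i + y i) * Z +
            (x i + y i + t * (x i + y i)) * ((q - 1) * Z) := by
          gcongr
          · exact mul_nonneg (by linarith) (hX.trans hprod)
          · exact le_add_of_nonneg_right (hy i)
      _ = x i * X + (q * (1 + t) - 1) * ((x i + y i) * Z) := by ring

theorem prod_add_mul_add_le_pow_mul (hx : ∀ i, 0 ≤ x i) (hy : ∀ i, 0 ≤ y i) (ht : 0 ≤ t) :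
    ∏ i ∈ s, (x i + t * (x i + y i)) ≤ (1 + t) ^ s.card * ∏ i ∈ s, (x i + y i) := by
  rw [Finset.pow_card_mul_prod]
  refine Finset.prod_le_prod (fun i _ => ?_) fun i _ => ?_
  · exact add_nonneg (hx i) (mul_nonneg ht (add_nonneg (hx i) (hy i)))
  · linarith [hy i]

theorem prod_add_mul_add_add_prod_le (hx : ∀ i, 0 ≤ x i) (hy : ∀ i, 0 ≤ y i) (ht : 0 ≤ t) :
    ∏ i ∈ s, (x i + t * (x i + y i)) + ∏ i ∈ s, (y i + t * (x i + y i)) ≤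
      ((1 + t) ^ s.card + t ^ s.card) * ∏ i ∈ s, (x i + y i) := by
  induction s using Finset.cons_induction with
  | empty => simp
  | cons i s hi ih =>
    have hX := prod_add_mul_add_le_pow_mul s hx hy ht
    have hY := prod_add_mul_add_le_pow_mul s hy hx ht
    simp only [add_comm (y _) (x _)] at hY
    simp only [Finset.prod_cons, Finset.card_cons, pow_succ]
    have hxi := hx i
    have hyi := hy i
    have : 0 ≤ t * (x i + y i) := mul_nonneg ht (add_nonneg hxi hyi)
    linear_combination x i * hX + y i * hY + t * (x i + y i) * ih

/-- The case of diagonal matrices of `det_add_smul_add_le`. -/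
theorem prod_add_prod_add_prod_le (hx : ∀ i, 0 ≤ x i) (hy : ∀ i, 0 ≤ y i) (ht : 0 ≤ t) :
    ∏ i ∈ s, (x i + t * (x i + y i)) + ∏ i ∈ s, (y i + t * (x i + y i)) + ∏ i ∈ s, (x i + y i) ≤
      ∏ i ∈ s, x i + ∏ i ∈ s, y i +
        ((1 + t) ^ s.card + t ^ s.card) * ∏ i ∈ s, (x i + y i) := by
  cases s using Finset.cons_induction with
  | empty => simp
  | cons i s hi =>
    have hX := prod_add_mul_add_le s hx hy ht
    have hY := prod_add_mul_add_le s hy hx ht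
    have hsum := prod_add_mul_add_add_prod_le s hx hy ht
    simp only [add_comm (y _) (x _)] at hY
    simp only [Finset.prod_cons, Finset.card_cons, pow_succ]
    have hxi := hx i
    have hyi := hy i
    have : 0 ≤ t * (x i + y i) := mul_nonneg ht (add_nonneg hxi hyi)
    linear_combination x i * hX + y i * hY + t * (x i + y i) * hsum

end ProductInequality

section Determinant

open Matrix

theorem det_smul_one_add_smul {n : Type*} [Fintype n] [DecidableEq n] {X : Matrix n n ℝ}
    (hX : X.IsHermitian) (s t : ℝ) :
    (s • (1 : Matrix n n ℝ) + t • X).det = ∏ i, (s + t * hX.eigenvalues i) := by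
  set U := hX.eigenvectorUnitary
  have hdiag : s • (1 : Matrix n n ℝ) + t • X = Unitary.conjStarAlgAut ℝ _ U
      (diagonal fun i => s + t * hX.eigenvalues i) := by
    conv_lhs => rw [hX.spectral_theorem]
    rw [← map_one (Unitary.conjStarAlgAut ℝ (Matrix n n ℝ) U), ← map_smul, ← map_smul, ← map_add]
    congr 1
    ext i j
    by_cases hij : i = j <;> simp [hij]
  rw [hdiag, Unitary.conjStarAlgAut_apply, det_mul, mul_comm, ← det_mul, ← mul_assoc,
    Unitary.coe_star_mul_self, one_mul, det_diagonal]

open scoped MatrixOrder in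
theorem exists_det_smul_add_smul_eq_prod {n : Type*} [Fintype n] [DecidableEq n]
    {A B : Matrix n n ℝ} (hA : A.PosDef) (hB : B.PosSemidef) :
    ∃ d : ℝ, 0 ≤ d ∧ ∃ l : n → ℝ, (∀ i, 0 ≤ l i) ∧
      ∀ s t : ℝ, (s • A + t • B).det = d * ∏ i, (s + t * l i) := by
  obtain ⟨C, hC, rfl : A = Cᴴ * C⟩ :=
    CStarAlgebra.isStrictlyPositive_iff_eq_star_mul_self.mp hA.isStrictlyPositive
  have hdet : IsUnit C.det := (isUnit_iff_isUnit_det C).1 hC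
  have hX : ((C⁻¹)ᴴ * B * C⁻¹).PosSemidef := hB.conjTranspose_mul_mul_same C⁻¹
  refine ⟨C.det * C.det, mul_self_nonneg _, hX.1.eigenvalues, hX.eigenvalues_nonneg,
    fun s t => ?_⟩
  have hcongr : s • (Cᴴ * C) + t • B =
      Cᴴ * (s • (1 : Matrix n n ℝ) + t • ((C⁻¹)ᴴ * B * C⁻¹)) * C := by
    have hinv : Cᴴ * (C⁻¹)ᴴ = 1 := by
      rw [← conjTranspose_mul, nonsing_inv_mul C hdet, conjTranspose_one]
    have hB' : Cᴴ * ((C⁻¹)ᴴ * B * C⁻¹) * C = B := by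
      rw [← mul_assoc, ← mul_assoc, hinv, one_mul, mul_assoc, nonsing_inv_mul C hdet, mul_one]
    rw [mul_add, add_mul, Matrix.mul_smul, Matrix.mul_smul, smul_mul, smul_mul, mul_one, hB']
  rw [hcongr, det_mul, det_mul, det_smul_one_add_smul hX.1, det_conjTranspose, star_trivial]
  ring

theorem det_nonneg_of_isPositive {E : Type*} [NormedAddCommGroup E] [InnerProductSpace ℝ E]
    [FiniteDimensional ℝ E] {T : E →ₗ[ℝ] E} (hT : T.IsPositive) : 0 ≤ T.det := by
  let b := stdOrthonormalBasis ℝ E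
  rw [← LinearMap.det_toMatrix b.toBasis]
  exact ((LinearMap.posSemidef_toMatrix_iff b).2 hT).det_nonneg

theorem det_ne_zero_of_inner_self_pos {E : Type*} [NormedAddCommGroup E] [InnerProductSpace ℝ E]
    [FiniteDimensional ℝ E] {T : E →ₗ[ℝ] E} (hT : ∀ v, v ≠ 0 → 0 < ⟪T v, v⟫) : T.det ≠ 0 := by
  intro hdet
  obtain ⟨v, hv, hv0⟩ := T.ker.ne_bot_iff.1 (LinearMap.bot_lt_ker_of_det_eq_zero hdet).ne'
  simpa [LinearMap.mem_ker.1 hv] using hT v hv0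

theorem det_add_smul_add_le {E : Type*} [NormedAddCommGroup E] [InnerProductSpace ℝ E]
    [FiniteDimensional ℝ E] {A B : E →ₗ[ℝ] E} (hA : A.IsPositive) (hA' : A.det ≠ 0)
    (hB : B.IsPositive) {t : ℝ} (ht : 0 ≤ t) :
    (A + t • (A + B)).det + (B + t • (A + B)).det + (A + B).det ≤
      A.det + B.det + ((1 + t) ^ Module.finrank ℝ E + t ^ Module.finrank ℝ E) * (A + B).det := by
  let b := stdOrthonormalBasis ℝ E
  have hAb := (LinearMap.posSemidef_toMatrix_iff b).2 hA
  have hBb := (LinearMap.posSemidef_toMatrix_iff b).2 hB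
  have hAb' : (A.toMatrix b.toBasis b.toBasis).PosDef := by
    rw [hAb.posDef_iff_isUnit, isUnit_iff_isUnit_det, LinearMap.det_toMatrix]
    exact hA'.isUnit
  obtain ⟨d, hd, l, hl, hdet⟩ := exists_det_smul_add_smul_eq_prod hAb' hBb
  have hcomb (p q : ℝ) : (p • A + q • B).det = d * ∏ i, (p + q * l i) := by
    rw [← hdet, ← LinearMap.det_toMatrix b.toBasis, map_add, map_smul, map_smul]
  have key := prod_add_prod_add_prod_le Finset.univ (x := fun _ => (1 : ℝ)) (y := l)
    (fun _ => zero_le_one) hl ht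
  rw [Finset.card_univ, Fintype.card_fin, Finset.prod_const_one] at key
  have h1 : (A + t • (A + B)).det = d * ∏ i, (1 + t * (1 + l i)) := by
    rw [show A + t • (A + B) = (1 + t) • A + t • B by module, hcomb]
    exact congrArg (d * ·) (Finset.prod_congr rfl fun i _ => by ring)
  have h2 : (B + t • (A + B)).det = d * ∏ i, (l i + t * (1 + l i)) := by
    rw [show B + t • (A + B) = t • A + (1 + t) • B by module, hcomb]
    exact congrArg (d * ·) (Finset.prod_congr rfl fun i _ => by ring)
  have h3 : (A + B).det = d * ∏ i, (1 + l i) := by simpa using hcomb 1 1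
  have h4 : A.det = d := by simpa using hcomb 1 0
  have h5 : B.det = d * ∏ i, l i := by simpa using hcomb 0 1
  rw [h1, h2, h3, h4, h5]
  linear_combination d * key

end Determinant

section ExpMoment

variable {m : ℕ} {F G : Type*} [NormedAddCommGroup F] [NormedSpace ℝ F] [NormedAddCommGroup G]
  [NormedSpace ℝ G] {K : Set (Euc m)} {p : Euc m}

/-- The exponential moment of a vector-valued function `g` over `K`, that is, its integral against
the unnormalised density `exp ⟪p, ·⟫`; for `g = 1` this is the Laplace transform of `K`. -/
def expMoment (K : Set (Euc m)) (g : Euc m → F) (p : Euc m) : F :=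
  ∫ x in K, Real.exp ⟪p, x⟫ • g x

theorem integrableOn_exp_inner_smul (hK : IsCompact K) {g : Euc m → F} (hg : Continuous g)
    (p : Euc m) : IntegrableOn (fun x => Real.exp ⟪p, x⟫ • g x) K :=
  ContinuousOn.integrableOn_compact hK (by fun_prop)

theorem continuous_innerSL_smulRight {g : Euc m → F} (hg : Continuous g) :
    Continuous fun x : Euc m => (innerSL ℝ x).smulRight (g x) := by
  have : Continuous fun x : Euc m => innerSL ℝ x := (innerSL ℝ).continuous
  fun_prop

theorem hasFDerivAt_inner_left (p x : Euc m) :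
    HasFDerivAt (fun q : Euc m => ⟪q, x⟫) (innerSL ℝ x) p :=
  (innerSL ℝ x).hasFDerivAt.congr_of_eventuallyEq (.of_forall fun q => real_inner_comm x q)

theorem hasFDerivAt_expMoment (hK : IsCompact K) {g : Euc m → F} (hg : Continuous g) (p : Euc m) :
    HasFDerivAt (expMoment K g) (expMoment K (fun x => (innerSL ℝ x).smulRight (g x)) p) p := by
  obtain ⟨R, hR⟩ := hK.isBounded.exists_norm_le
  obtain ⟨C, hC⟩ := hK.exists_bound_of_continuousOn hg.continuousOn
  refine hasFDerivAt_integral_of_dominated_of_fderiv_le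
    (F' := fun q x => Real.exp ⟪q, x⟫ • (innerSL ℝ x).smulRight (g x))
    (bound := fun _ => Real.exp ((‖p‖ + 1) * R) * (R * C)) (Metric.ball_mem_nhds p one_pos)
    (.of_forall fun q => (integrableOn_exp_inner_smul hK hg q).aestronglyMeasurable)
    (integrableOn_exp_inner_smul hK hg p)
    (integrableOn_exp_inner_smul hK (continuous_innerSL_smulRight hg) p).aestronglyMeasurable
    ((ae_restrict_iff' hK.measurableSet).2 (.of_forall fun x hx q hq => ?_))
    (integrableOn_const hK.measure_ne_top) (.of_forall fun x q _ => ?_)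
  · have hR0 : 0 ≤ R := (norm_nonneg x).trans (hR x hx)
    have hq_norm : ‖q‖ ≤ ‖p‖ + 1 := norm_lt_of_mem_ball hq |>.le
    rw [norm_smul, ContinuousLinearMap.norm_smulRight_apply, innerSL_apply_norm, Real.norm_eq_abs,
      Real.abs_exp]
    gcongr
    · exact (real_inner_le_norm q x).trans (by gcongr; exact hR x hx)
    · exact hR x hx
    · exact hC x hx
  · convert (hasFDerivAt_inner_left q x).exp.smul_const (g x) using 1
    ext v
    simp [mul_smul]

theorem expMoment_sub (hK : IsCompact K) {g g' : Euc m → F} (hg : Continuous g)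
    (hg' : Continuous g') (p : Euc m) :
    expMoment K (fun x => g x - g' x) p = expMoment K g p - expMoment K g' p := by
  simp only [expMoment, smul_sub]
  exact integral_sub (integrableOn_exp_inner_smul hK hg p) (integrableOn_exp_inner_smul hK hg' p)

theorem expMoment_const [CompleteSpace F] (K : Set (Euc m)) (c : F) (p : Euc m) :
    expMoment K (fun _ => c) p = expMoment K (fun _ => (1 : ℝ)) p • c := by
  simp only [expMoment, smul_eq_mul, mul_one]
  exact integral_smul_const (fun x => Real.exp ⟪p, x⟫) c

theorem expMoment_clm_apply [CompleteSpace F] [CompleteSpace G] (hK : IsCompact K)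
    {g : Euc m → F} (hg : Continuous g) (T : F →L[ℝ] G) (p : Euc m) :
    expMoment K (fun x => T (g x)) p = T (expMoment K g p) := by
  simp only [expMoment, ← T.integral_comp_comm (integrableOn_exp_inner_smul hK hg p), map_smul]

theorem expMoment_pos (hK : IsConvexBody K) {g : Euc m → ℝ} (hg : Continuous g) (h0 : 0 ≤ g)
    {x : Euc m} (hx : x ∈ interior K) (hgx : g x ≠ 0) (p : Euc m) : 0 < expMoment K g p := by
  have hopen : IsOpen ({y | g y ≠ 0} ∩ interior K) :=
    (isOpen_ne_fun hg continuous_const).inter isOpen_interior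
  refine (setIntegral_pos_iff_support_of_nonneg_ae
    (.of_forall fun y => smul_nonneg (Real.exp_pos _).le (h0 y))
    (integrableOn_exp_inner_smul hK.2.1 hg p)).2 ?_
  refine (hopen.measure_pos volume ⟨x, hgx, hx⟩).trans_le (measure_mono ?_)
  exact fun y hy => ⟨smul_ne_zero (Real.exp_pos _).ne' hy.1, interior_subset hy.2⟩

theorem expMoment_one_pos (hK : IsConvexBody K) (p : Euc m) :
    0 < expMoment K (fun _ => (1 : ℝ)) p :=
  expMoment_pos hK continuous_const (fun _ => zero_le_one) hK.2.2.some_mem one_ne_zero p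

end ExpMoment

section TiltedMean

variable {m : ℕ} {K : Set (Euc m)} {p : Euc m}

/-- The barycenter of `K` with respect to the probability density proportional to `exp ⟪p, ·⟫`. -/
def tiltedMean (K : Set (Euc m)) (p : Euc m) : Euc m :=
  (expMoment K (fun _ => (1 : ℝ)) p)⁻¹ • expMoment K (fun x => x) p

/-- The covariance operator of `K` with respect to the probability density proportional to
`exp ⟪p, ·⟫`. -/
def tiltedCov (K : Set (Euc m)) (p : Euc m) : Euc m →L[ℝ] Euc m :=
  (expMoment K (fun _ => (1 : ℝ)) p)⁻¹ •
    expMoment K (fun x => (innerSL ℝ (x - tiltedMean K p)).smulRight (x - tiltedMean K p)) p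

theorem tiltedMean_mem (hK : IsConvexBody K) (p : Euc m) : tiltedMean K p ∈ K := by
  have : NeZero (volume.restrict K) :=
    ⟨(Measure.measure_univ_pos.1 <| by
      simpa using (isOpen_interior.measure_pos volume hK.2.2).trans_le
        (measure_mono interior_subset))⟩
  have hint : Integrable (fun x => Real.exp ⟪p, x⟫) (volume.restrict K) := by
    simpa [IntegrableOn] using
      integrableOn_exp_inner_smul hK.2.1 (continuous_const (y := (1 : ℝ))) p
  have := isProbabilityMeasure_tilted hint
  have hmean : tiltedMean K p = ∫ x, x ∂(volume.restrict K).tilted fun x => ⟪p, x⟫ := by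
    simp only [integral_tilted, tiltedMean, expMoment, smul_eq_mul, mul_one, div_eq_inv_mul,
      mul_smul, integral_smul]
  rw [hmean]
  refine hK.1.integral_mem hK.2.1.isClosed ?_ ?_
  · exact (tilted_absolutelyContinuous _ _).ae_le (ae_restrict_mem hK.2.1.measurableSet)
  · exact (integrable_tilted_iff hint _).2 (integrableOn_exp_inner_smul hK.2.1 continuous_id p)

theorem tiltedMean_eq_add (hK : IsConvexBody K) (c p : Euc m) :
    tiltedMean K p =
      c + (expMoment K (fun _ => (1 : ℝ)) p)⁻¹ • expMoment K (fun x => x - c) p := by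
  rw [expMoment_sub hK.2.1 continuous_id' continuous_const, expMoment_const K c, smul_sub,
    inv_smul_smul₀ (expMoment_one_pos hK p).ne', add_sub_cancel]
  rfl

theorem expMoment_sub_tiltedMean (hK : IsConvexBody K) (p : Euc m) :
    expMoment K (fun x => x - tiltedMean K p) p = 0 := by
  simpa [(expMoment_one_pos hK p).ne'] using tiltedMean_eq_add hK (tiltedMean K p) p

theorem expMoment_innerSL_smulRight_sub_tiltedMean (hK : IsConvexBody K) (p : Euc m) :
    expMoment K (fun x => (innerSL ℝ x).smulRight (x - tiltedMean K p)) p =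
      expMoment K (fun x => (innerSL ℝ (x - tiltedMean K p)).smulRight (x - tiltedMean K p)) p := by
  set c := tiltedMean K p
  have hcont : Continuous fun x : Euc m => x - c := by fun_prop
  have hzero : expMoment K (fun x => (innerSL ℝ c).smulRight (x - c)) p = 0 := by
    have := expMoment_clm_apply hK.2.1 hcont
      (ContinuousLinearMap.smulRightL ℝ (Euc m) (Euc m) (innerSL ℝ c)) p
    rwa [expMoment_sub_tiltedMean hK p, map_zero] at this
  have hsub (x : Euc m) : (innerSL ℝ (x - c)).smulRight (x - c) =
      (innerSL ℝ x).smulRight (x - c) - (innerSL ℝ c).smulRight (x - c) := by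
    ext1 v
    simp [sub_smul]
  simp only [hsub]
  rw [expMoment_sub hK.2.1 (continuous_innerSL_smulRight hcont) (by fun_prop), hzero, sub_zero]

theorem hasFDerivAt_tiltedMean (hK : IsConvexBody K) (p : Euc m) :
    HasFDerivAt (tiltedMean K) (tiltedCov K p) p := by
  set c := tiltedMean K p
  have hZ := (hasDerivAt_inv (expMoment_one_pos hK p).ne').comp_hasFDerivAt p
    (hasFDerivAt_expMoment hK.2.1 (continuous_const (y := (1 : ℝ))) p)
  have hmoment := hasFDerivAt_expMoment hK.2.1 (g := fun x => x - c) (by fun_prop) p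
  refine ((hZ.smul hmoment).const_add c).congr_of_eventuallyEq
    (.of_forall (tiltedMean_eq_add hK c)) |>.congr_fderiv ?_
  rw [expMoment_sub_tiltedMean hK p, expMoment_innerSL_smulRight_sub_tiltedMean hK p, tiltedCov]
  simp

theorem inner_tiltedCov (hK : IsConvexBody K) (p v w : Euc m) :
    ⟪tiltedCov K p v, w⟫ = (expMoment K (fun _ => (1 : ℝ)) p)⁻¹ *
      expMoment K (fun x => ⟪x - tiltedMean K p, v⟫ * ⟪x - tiltedMean K p, w⟫) p := by
  have := expMoment_clm_apply hK.2.1 (g := fun x : Euc m =>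
      (innerSL ℝ (x - tiltedMean K p)).smulRight (x - tiltedMean K p))
    (by have := (innerSL ℝ (E := Euc m)).continuous; fun_prop)
    (innerSL ℝ w ∘L ContinuousLinearMap.apply ℝ (Euc m) v) p
  simp only [ContinuousLinearMap.comp_apply, ContinuousLinearMap.apply_apply, innerSL_apply_apply,
    ContinuousLinearMap.smulRight_apply, real_inner_comm _ w, real_inner_smul_left] at this
  rw [tiltedCov, _root_.smul_apply, inner_smul_left, ← this]
  rfl

theorem inner_tiltedCov_self_pos (hK : IsConvexBody K) (p : Euc m) {v : Euc m} (hv : v ≠ 0) :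
    0 < ⟪tiltedCov K p v, v⟫ := by
  obtain ⟨x, hx, hxv⟩ : ∃ x ∈ interior K, ⟪x - tiltedMean K p, v⟫ ≠ 0 := by
    by_contra! hzero
    obtain ⟨x, hx⟩ := hK.2.2
    have hderiv : HasFDerivAt (fun y => ⟪y - tiltedMean K p, v⟫) (innerSL ℝ v) x := by
      simpa only [inner_sub_left] using (hasFDerivAt_inner_left x v).sub_const _
    have hconst := (hasFDerivAt_const (𝕜 := ℝ) (0 : ℝ) x).congr_of_eventuallyEq
      (Filter.eventuallyEq_of_mem (isOpen_interior.mem_nhds hx) hzero)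
    simpa [hv] using ContinuousLinearMap.ext_iff.1 (hderiv.unique hconst) v
  rw [inner_tiltedCov hK]
  refine mul_pos (inv_pos.2 (expMoment_one_pos hK p)) ?_
  exact expMoment_pos (g := fun y => ⟪y - tiltedMean K p, v⟫ * ⟪y - tiltedMean K p, v⟫) hK
    (by fun_prop) (fun y => mul_self_nonneg _) hx (mul_self_ne_zero.2 hxv) p

theorem isPositive_tiltedCov (hK : IsConvexBody K) (p : Euc m) :
    (tiltedCov K p : Euc m →ₗ[ℝ] Euc m).IsPositive := by
  refine ⟨fun v w => ?_, fun v => ?_⟩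
  · simp only [ContinuousLinearMap.coe_coe]
    rw [inner_tiltedCov hK, real_inner_comm, inner_tiltedCov hK]
    simp only [mul_comm]
  · rcases eq_or_ne v 0 with rfl | hv
    · simp
    · exact (inner_tiltedCov_self_pos hK p hv).le

end TiltedMean

theorem injective_of_inner_fderiv_pos {E : Type*} [NormedAddCommGroup E] [InnerProductSpace ℝ E]
    {F : E → E} {F' : E → E →L[ℝ] E} (hF : ∀ p, HasFDerivAt F (F' p) p)
    (hpos : ∀ p v, v ≠ 0 → 0 < ⟪F' p v, v⟫) : Function.Injective F := by
  intro p q hpq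
  by_contra hne
  have hderiv (r : ℝ) : HasDerivAt (fun r : ℝ => ⟪F (p + r • (q - p)), q - p⟫)
      ⟪F' (p + r • (q - p)) (q - p), q - p⟫ r := by
    have hline : HasDerivAt (fun r : ℝ => p + r • (q - p)) (q - p) r := by
      simpa using ((hasDerivAt_id r).smul_const (q - p)).const_add p
    simpa using ((hF (p + r • (q - p))).comp_hasDerivAt r hline).inner ℝ
      (hasDerivAt_const r (q - p))
  have hmono := strictMono_of_hasDerivAt_pos hderiv
    fun r => hpos _ _ (sub_ne_zero.2 (Ne.symm hne))
  simpa [hpq] using hmono (zero_lt_one' ℝ)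

section LogLaplace

variable {m : ℕ} {K L : Set (Euc m)}

theorem hasFDerivAt_log_expMoment (hK : IsConvexBody K) (p : Euc m) :
    HasFDerivAt (fun p => Real.log (expMoment K (fun _ => (1 : ℝ)) p))
      (innerSL ℝ (tiltedMean K p)) p := by
  refine ((hasFDerivAt_expMoment hK.2.1 continuous_const p).log
    (expMoment_one_pos hK p).ne').congr_fderiv (ContinuousLinearMap.ext fun v => ?_)
  have hderiv := expMoment_clm_apply hK.2.1 (continuous_innerSL_smulRight (m := m)
    (continuous_const (y := (1 : ℝ)))) (ContinuousLinearMap.apply ℝ ℝ v) p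
  have hmean := expMoment_clm_apply hK.2.1 continuous_id' (innerSL ℝ v) p
  simp only [ContinuousLinearMap.apply_apply, ContinuousLinearMap.smulRight_apply,
    innerSL_apply_apply, smul_eq_mul, mul_one] at hderiv hmean
  rw [_root_.smul_apply, ← hderiv, innerSL_apply_apply, tiltedMean, real_inner_smul_left,
    real_inner_comm, ← hmean]
  simp only [real_inner_comm v, smul_eq_mul]

theorem IsConvexBody.volume_pos (hK : IsConvexBody K) : 0 < volume K :=
  (isOpen_interior.measure_pos volume hK.2.2).trans_le (measure_mono interior_subset)

theorem IsConvexBody.volume_real_pos (hK : IsConvexBody K) : 0 < volume.real K :=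
  ENNReal.toReal_pos hK.volume_pos.ne' hK.2.1.measure_ne_top

theorem le_expMoment_one (hK : IsConvexBody K) {D θ : ℝ} (hD : ∀ x ∈ K, ∀ y ∈ K, ‖x - y‖ ≤ D)
    (h0 : 0 ≤ θ) (h1 : θ ≤ 1) {x : Euc m} (hx : x ∈ K) (p : Euc m) :
    θ ^ m * volume.real K * Real.exp (⟪p, x⟫ - θ * (‖p‖ * D)) ≤
      expMoment K (fun _ => (1 : ℝ)) p := by
  have hsub : AffineMap.homothety x θ '' K ⊆ K := by
    rintro _ ⟨y, hy, rfl⟩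
    rw [AffineMap.homothety_eq_lineMap]
    exact hK.1.lineMap_mem hx hy ⟨h0, h1⟩
  have hcomp : IsCompact (AffineMap.homothety x θ '' K) :=
    hK.2.1.image (AffineMap.homothety_continuous x θ)
  have hvol : volume.real (AffineMap.homothety x θ '' K) = θ ^ m * volume.real K := by
    rw [Measure.real, Measure.addHaar_image_homothety, ENNReal.toReal_mul, ENNReal.toReal_ofReal
      (abs_nonneg _), finrank_euclideanSpace_fin, abs_of_nonneg (by positivity), Measure.real]
  calc θ ^ m * volume.real K * Real.exp (⟪p, x⟫ - θ * (‖p‖ * D))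
      = ∫ _ in AffineMap.homothety x θ '' K, Real.exp (⟪p, x⟫ - θ * (‖p‖ * D)) := by
        rw [setIntegral_const, hvol, smul_eq_mul]
    _ ≤ ∫ y in AffineMap.homothety x θ '' K, Real.exp ⟪p, y⟫ • (1 : ℝ) := by
        refine setIntegral_mono_on (integrableOn_const hcomp.measure_ne_top)
          (integrableOn_exp_inner_smul hcomp continuous_const p) hcomp.measurableSet ?_
        rintro _ ⟨y, hy, rfl⟩
        rw [smul_eq_mul, mul_one, Real.exp_le_exp, AffineMap.homothety_apply, vsub_eq_sub,
          vadd_eq_add, inner_add_right, inner_smul_right]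
        have hinner : -(‖p‖ * D) ≤ ⟪p, y - x⟫ :=
          (neg_le_neg (by gcongr; exact hD y hy x hx)).trans
            (neg_le_of_abs_le (abs_real_inner_le_norm p (y - x)))
        linarith [mul_le_mul_of_nonneg_left hinner h0]
    _ ≤ expMoment K (fun _ => (1 : ℝ)) p :=
        setIntegral_mono_set (integrableOn_exp_inner_smul hK.2.1 continuous_const p)
          (.of_forall fun x => by positivity) (LE.le.eventuallyLE hsub)

theorem exists_add_inner_sub_le_log_expMoment (hK : IsConvexBody K) {ε : ℝ} (hε : 0 < ε) :
    ∃ c, ∀ x ∈ K, ∀ p,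
      c + ⟪p, x⟫ - ε * ‖p‖ ≤ Real.log (expMoment K (fun _ => (1 : ℝ)) p) := by
  obtain ⟨D, hD0, hD⟩ : ∃ D > 0, ∀ x ∈ K, ∀ y ∈ K, ‖x - y‖ ≤ D := by
    obtain ⟨D, hD⟩ := Metric.isBounded_iff.1 hK.2.1.isBounded
    refine ⟨max 1 D, by positivity, fun x hx y hy => ?_⟩
    exact (dist_eq_norm x y).symm.trans_le ((hD hx hy).trans (le_max_right 1 D))
  set θ := min 1 (ε / D)
  have hθ0 : 0 < θ := lt_min one_pos (by positivity)
  have hθD : θ * D ≤ ε := (le_div_iff₀ hD0).1 (min_le_right _ _)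
  have hv := hK.volume_real_pos
  refine ⟨Real.log (θ ^ m * volume.real K), fun x hx p => ?_⟩
  calc Real.log (θ ^ m * volume.real K) + ⟪p, x⟫ - ε * ‖p‖
      ≤ Real.log (θ ^ m * volume.real K) + (⟪p, x⟫ - θ * (‖p‖ * D)) := by
        linarith [mul_le_mul_of_nonneg_right hθD (norm_nonneg p)]
    _ = Real.log (θ ^ m * volume.real K * Real.exp (⟪p, x⟫ - θ * (‖p‖ * D))) := by
        rw [Real.log_mul (by positivity) (Real.exp_pos _).ne', Real.log_exp]
    _ ≤ _ := Real.log_le_log (by positivity)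
        (le_expMoment_one hK hD hθ0.le (min_le_left _ _) hx p)

theorem exists_add_mul_norm_le_log_expMoment (hK : IsConvexBody K) (hL : IsConvexBody L)
    {s t : ℝ} (hs : 0 < s) (ht : 0 < t) {z : Euc m} (hz : z ∈ interior (s • K + t • L)) :
    ∃ c, ∃ r > 0, ∀ p, c + r * ‖p‖ ≤ s * Real.log (expMoment K (fun _ => (1 : ℝ)) p) +
      t * Real.log (expMoment L (fun _ => (1 : ℝ)) p) - ⟪p, z⟫ := by
  obtain ⟨r, hr, hball⟩ := Metric.nhds_basis_closedBall.mem_iff.1 (mem_interior_iff_mem_nhds.1 hz)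
  have hε : 0 < r / (2 * (s + t)) := by positivity
  obtain ⟨a, ha⟩ := exists_add_inner_sub_le_log_expMoment hK hε
  obtain ⟨b, hb⟩ := exists_add_inner_sub_le_log_expMoment hL hε
  refine ⟨s * a + t * b, r / 2, by positivity, fun p => ?_⟩
  have hnorm : ‖p‖⁻¹ * ‖p‖ ≤ 1 := inv_mul_le_one
  have hmem : z + (r * ‖p‖⁻¹) • p ∈ s • K + t • L := hball <| by
    rw [mem_closedBall_iff_norm, add_sub_cancel_left, norm_smul, Real.norm_eq_abs,
      abs_of_nonneg (by positivity), mul_assoc]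
    exact mul_le_of_le_one_right hr.le hnorm
  obtain ⟨_, ⟨x, hx, rfl⟩, _, ⟨y, hy, rfl⟩, hxy⟩ := hmem
  have hinner : s * ⟪p, x⟫ + t * ⟪p, y⟫ = ⟪p, z⟫ + r * ‖p‖ := by
    have hxy : s • x + t • y = z + (r * ‖p‖⁻¹) • p := hxy
    rw [← real_inner_smul_right, ← real_inner_smul_right, ← inner_add_right, hxy, inner_add_right,
      real_inner_smul_right, real_inner_self_eq_norm_sq]
    rcases eq_or_ne p 0 with rfl | hp
    · simp
    · field_simp [norm_ne_zero_iff.2 hp]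
  have hst : (s + t) * (r / (2 * (s + t)) * ‖p‖) = r / 2 * ‖p‖ := by field_simp
  linarith [mul_le_mul_of_nonneg_left (ha x hx p) hs.le,
    mul_le_mul_of_nonneg_left (hb y hy p) ht.le]

theorem interior_subset_range_tiltedMean (hK : IsConvexBody K) (hL : IsConvexBody L) {s t : ℝ}
    (hs : 0 < s) (ht : 0 < t) :
    interior (s • K + t • L) ⊆ range fun p => s • tiltedMean K p + t • tiltedMean L p := by
  intro z hz
  obtain ⟨c, r, hr, hcoercive⟩ := exists_add_mul_norm_le_log_expMoment hK hL hs ht hz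
  have hderiv (p : Euc m) := (((hasFDerivAt_log_expMoment hK p).const_mul s).add
    ((hasFDerivAt_log_expMoment hL p).const_mul t)).sub (hasFDerivAt_inner_left p z)
  obtain ⟨p, hp⟩ := (continuous_iff_continuousAt.2 fun p => (hderiv p).continuousAt)
    |>.exists_forall_le <| Filter.tendsto_atTop_mono hcoercive <|
      Filter.tendsto_atTop_add_const_left _ _ <|
        (tendsto_norm_cocompact_atTop (E := Euc m)).const_mul_atTop hr
  have hcritical := IsLocalMin.hasFDerivAt_eq_zero (.of_forall hp) (hderiv p)
  rw [sub_eq_zero] at hcritical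
  refine ⟨p, ext_inner_right ℝ fun v => ?_⟩
  simpa [inner_add_left, real_inner_smul_left] using ContinuousLinearMap.ext_iff.1 hcritical v

end LogLaplace

section Perturbation

variable {m : ℕ} {K L : Set (Euc m)} {s t : ℝ}

theorem hasFDerivAt_smul_tiltedMean_add (hK : IsConvexBody K) (hL : IsConvexBody L) (s t : ℝ)
    (p : Euc m) : HasFDerivAt (fun p => s • tiltedMean K p + t • tiltedMean L p)
      (s • tiltedCov K p + t • tiltedCov L p) p :=
  ((hasFDerivAt_tiltedMean hK p).const_smul s).add ((hasFDerivAt_tiltedMean hL p).const_smul t)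

/-- The Jacobian determinant of the map `s • tiltedMean K + t • tiltedMean L`, which parametrises
the interior of `s • K + t • L`. -/
def tiltedJacobian (K L : Set (Euc m)) (s t : ℝ) (p : Euc m) : ℝ :=
  (s • tiltedCov K p + t • tiltedCov L p).det

theorem inner_smul_tiltedCov_add_self_pos (hK : IsConvexBody K) (hL : IsConvexBody L)
    (hs : 0 ≤ s) (ht : 0 ≤ t) (hst : 0 < s + t) (p : Euc m) {v : Euc m} (hv : v ≠ 0) :
    0 < ⟪(s • tiltedCov K p + t • tiltedCov L p) v, v⟫ := by
  have hKv := inner_tiltedCov_self_pos hK p hv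
  have hLv := inner_tiltedCov_self_pos hL p hv
  simp only [_root_.add_apply, _root_.smul_apply, inner_add_left, real_inner_smul_left]
  rcases hs.eq_or_lt with rfl | hs
  · have : 0 < t := by simpa using hst
    positivity
  · positivity

theorem tiltedJacobian_nonneg (hK : IsConvexBody K) (hL : IsConvexBody L) (hs : 0 ≤ s)
    (ht : 0 ≤ t) (p : Euc m) : 0 ≤ tiltedJacobian K L s t p :=
  det_nonneg_of_isPositive (((isPositive_tiltedCov hK p).smul_of_nonneg hs).add
    ((isPositive_tiltedCov hL p).smul_of_nonneg ht))

theorem aemeasurable_tiltedJacobian (hK : IsConvexBody K) (hL : IsConvexBody L) (hs : 0 ≤ s)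
    (ht : 0 ≤ t) : AEMeasurable fun p => ENNReal.ofReal (tiltedJacobian K L s t p) := by
  have h : AEMeasurable (fun p => ENNReal.ofReal |tiltedJacobian K L s t p|)
      (volume.restrict univ) :=
    aemeasurable_ofReal_abs_det_fderivWithin volume MeasurableSet.univ
      fun p _ => (hasFDerivAt_smul_tiltedMean_add hK hL s t p).hasFDerivWithinAt
  simpa only [abs_of_nonneg (tiltedJacobian_nonneg hK hL hs ht _), Measure.restrict_univ] using h

theorem volume_smul_add_smul_le_lintegral (hK : IsConvexBody K) (hL : IsConvexBody L)
    (hs : 0 < s) (ht : 0 < t) :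
    volume (s • K + t • L) ≤ ∫⁻ p, ENNReal.ofReal (tiltedJacobian K L s t p) := by
  have hconv : Convex ℝ (s • K + t • L) := (hK.1.smul s).add (hL.1.smul t)
  calc volume (s • K + t • L)
      = volume (interior (s • K + t • L)) :=
        (measure_congr (interior_ae_eq_of_null_frontier (hconv.addHaar_frontier volume))).symm
    _ ≤ volume ((fun p => s • tiltedMean K p + t • tiltedMean L p) '' univ) := by
        rw [image_univ]
        exact measure_mono (interior_subset_range_tiltedMean hK hL hs ht)
    _ ≤ ∫⁻ p in univ, ENNReal.ofReal |tiltedJacobian K L s t p| :=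
        addHaar_image_le_lintegral_abs_det_fderiv volume MeasurableSet.univ
          fun p _ => (hasFDerivAt_smul_tiltedMean_add hK hL s t p).hasFDerivWithinAt
    _ = _ := by simp only [abs_of_nonneg (tiltedJacobian_nonneg hK hL hs.le ht.le _),
        setLIntegral_univ]

theorem lintegral_le_volume_smul_add_smul (hK : IsConvexBody K) (hL : IsConvexBody L)
    (hs : 0 ≤ s) (ht : 0 ≤ t) (hst : 0 < s + t) :
    ∫⁻ p, ENNReal.ofReal (tiltedJacobian K L s t p) ≤ volume (s • K + t • L) := by
  have hderiv := hasFDerivAt_smul_tiltedMean_add hK hL s t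
  have hinj := injective_of_inner_fderiv_pos hderiv fun p _ hv =>
    inner_smul_tiltedCov_add_self_pos hK hL hs ht hst p hv
  calc ∫⁻ p, ENNReal.ofReal (tiltedJacobian K L s t p)
      = ∫⁻ p in univ, ENNReal.ofReal |tiltedJacobian K L s t p| := by
        simp only [abs_of_nonneg (tiltedJacobian_nonneg hK hL hs ht _), setLIntegral_univ]
    _ = volume ((fun p => s • tiltedMean K p + t • tiltedMean L p) '' univ) :=
        lintegral_abs_det_fderiv_eq_addHaar_image volume MeasurableSet.univ
          (fun p _ => (hderiv p).hasFDerivWithinAt) hinj.injOn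
    _ ≤ volume (s • K + t • L) := by
        refine measure_mono ?_
        rintro _ ⟨p, -, rfl⟩
        exact add_mem_add (smul_mem_smul_set (tiltedMean_mem hK p))
          (smul_mem_smul_set (tiltedMean_mem hL p))

theorem tiltedJacobian_add_le (hK : IsConvexBody K) (hL : IsConvexBody L) (ht : 0 ≤ t)
    (p : Euc m) :
    tiltedJacobian K L (1 + t) t p + tiltedJacobian K L t (1 + t) p + tiltedJacobian K L 1 1 p ≤
      tiltedJacobian K L 1 0 p + tiltedJacobian K L 0 1 p +
        ((1 + t) ^ m + t ^ m) * tiltedJacobian K L 1 1 p := by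
  let A : Euc m →ₗ[ℝ] Euc m := ↑(tiltedCov K p)
  let B : Euc m →ₗ[ℝ] Euc m := ↑(tiltedCov L p)
  have hjac (a b : ℝ) : tiltedJacobian K L a b p = (a • A + b • B).det := rfl
  have hdet : A.det ≠ 0 := det_ne_zero_of_inner_self_pos fun _ => inner_tiltedCov_self_pos hK p
  have h := det_add_smul_add_le (isPositive_tiltedCov hK p) hdet (isPositive_tiltedCov hL p) ht
  rw [finrank_euclideanSpace_fin] at h
  simp only [hjac, show (1 + t) • A + t • B = A + t • (A + B) by module,
    show t • A + (1 + t) • B = B + t • (A + B) by module, zero_smul, add_zero, zero_add, one_smul]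
  exact h

theorem ofReal_tiltedJacobian_add_le (hK : IsConvexBody K) (hL : IsConvexBody L) (ht : 0 ≤ t)
    (p : Euc m) :
    ENNReal.ofReal (tiltedJacobian K L (1 + t) t p) +
        ENNReal.ofReal (tiltedJacobian K L t (1 + t) p) +
        ENNReal.ofReal (tiltedJacobian K L 1 1 p) ≤
      ENNReal.ofReal (tiltedJacobian K L 1 0 p) + ENNReal.ofReal (tiltedJacobian K L 0 1 p) +
        ENNReal.ofReal ((1 + t) ^ m + t ^ m) * ENNReal.ofReal (tiltedJacobian K L 1 1 p) := by
  have hnonneg {a b : ℝ} (ha : 0 ≤ a) (hb : 0 ≤ b) := tiltedJacobian_nonneg hK hL ha hb p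
  have ht1 : 0 ≤ 1 + t := by positivity
  rw [← ENNReal.ofReal_add (hnonneg ht1 ht) (hnonneg ht ht1),
    ← ENNReal.ofReal_add (add_nonneg (hnonneg ht1 ht) (hnonneg ht ht1))
      (hnonneg zero_le_one zero_le_one), ← ENNReal.ofReal_mul (by positivity)]
  refine (ENNReal.ofReal_le_ofReal (tiltedJacobian_add_le hK hL ht p)).trans ?_
  exact ENNReal.ofReal_add_le.trans (add_le_add_left ENNReal.ofReal_add_le _)

theorem lintegral_tiltedJacobian_add_le (hK : IsConvexBody K) (hL : IsConvexBody L)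
    (ht : 0 ≤ t) :
    (∫⁻ p, ENNReal.ofReal (tiltedJacobian K L (1 + t) t p)) +
        (∫⁻ p, ENNReal.ofReal (tiltedJacobian K L t (1 + t) p)) +
        ∫⁻ p, ENNReal.ofReal (tiltedJacobian K L 1 1 p) ≤
      (∫⁻ p, ENNReal.ofReal (tiltedJacobian K L 1 0 p)) +
        (∫⁻ p, ENNReal.ofReal (tiltedJacobian K L 0 1 p)) +
        ENNReal.ofReal ((1 + t) ^ m + t ^ m) *
          ∫⁻ p, ENNReal.ofReal (tiltedJacobian K L 1 1 p) := by
  have hmeas {a b : ℝ} (ha : 0 ≤ a) (hb : 0 ≤ b) :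
      AEMeasurable fun p => ENNReal.ofReal (tiltedJacobian K L a b p) :=
    aemeasurable_tiltedJacobian hK hL ha hb
  have hJ := hmeas zero_le_one zero_le_one
  rw [← lintegral_const_mul' _ _ ENNReal.ofReal_ne_top,
    ← lintegral_add_right' _ (hmeas ht (by positivity)), ← lintegral_add_right' _ hJ,
    ← lintegral_add_right' _ (hmeas le_rfl zero_le_one),
    ← lintegral_add_right' _ (hJ.const_mul _)]
  exact lintegral_mono fun p => ofReal_tiltedJacobian_add_le hK hL ht p

theorem volume_add_smul_add_le (hK : IsConvexBody K) (hL : IsConvexBody L) (ht : 0 < t) :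
    volume (K + t • (K + L)) + volume (L + t • (K + L)) + volume (K + L) ≤
      volume K + volume L + ENNReal.ofReal ((1 + t) ^ m + t ^ m) * volume (K + L) := by
  let J (a b : ℝ) (p : Euc m) : ℝ≥0∞ := ENNReal.ofReal (tiltedJacobian K L a b p)
  have hle {a b : ℝ} (ha : 0 < a) (hb : 0 < b) : volume (a • K + b • L) ≤ ∫⁻ p, J a b p :=
    volume_smul_add_smul_le_lintegral hK hL ha hb
  have hge {a b : ℝ} (ha : 0 ≤ a) (hb : 0 ≤ b) (hab : 0 < a + b) :
      ∫⁻ p, J a b p ≤ volume (a • K + b • L) := lintegral_le_volume_smul_add_smul hK hL ha hb hab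
  have ht1 : 0 < 1 + t := by positivity
  have hKt : K + t • (K + L) = (1 + t) • K + t • L := by
    rw [smul_add, ← add_assoc, hK.1.add_smul zero_le_one ht.le, one_smul]
  have hLt : L + t • (K + L) = t • K + (1 + t) • L := by
    rw [smul_add, hL.1.add_smul zero_le_one ht.le, one_smul, add_left_comm]
  have hJK : ∫⁻ p, J 1 0 p ≤ volume K := by
    simpa [zero_smul_set (hL.2.2.mono interior_subset)] using
      hge zero_le_one le_rfl (by norm_num)
  have hJL : ∫⁻ p, J 0 1 p ≤ volume L := by
    simpa [zero_smul_set (hK.2.2.mono interior_subset)] using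
      hge le_rfl zero_le_one (by norm_num)
  have hKL : volume (K + L) = ∫⁻ p, J 1 1 p := by
    rw [← one_smul ℝ K, ← one_smul ℝ L]
    exact (hle one_pos one_pos).antisymm (hge zero_le_one zero_le_one (by norm_num))
  calc volume (K + t • (K + L)) + volume (L + t • (K + L)) + volume (K + L)
      ≤ (∫⁻ p, J (1 + t) t p) + (∫⁻ p, J t (1 + t) p) + ∫⁻ p, J 1 1 p := by
        rw [hKt, hLt, hKL]
        exact add_le_add_three (hle ht1 ht) (hle ht ht1) le_rfl
    _ ≤ (∫⁻ p, J 1 0 p) + (∫⁻ p, J 0 1 p) +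
          ENNReal.ofReal ((1 + t) ^ m + t ^ m) * ∫⁻ p, J 1 1 p :=
        lintegral_tiltedJacobian_add_le hK hL ht.le
    _ ≤ volume K + volume L + ENNReal.ofReal ((1 + t) ^ m + t ^ m) * volume (K + L) := by
        rw [hKL]
        gcongr

end Perturbation

/-! ### Splitting off a line -/

section Splitting

variable {k : ℕ} {u w : Euc (k + 1)}

/-- `Ψ` identifies `Euc (k + 1)` isometrically with the orthogonal sum of the line spanned by `u`
and `Euc k`. The codomain carries the product measure but the sup norm, so the isometry is stated
through `norm_sq_eq`. -/
structure IsOrthogonalSplitting (u : Euc (k + 1)) (Ψ : Euc (k + 1) ≃L[ℝ] ℝ × Euc k) : Prop where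
  measurePreserving : MeasurePreserving Ψ
  fst_apply (v : Euc (k + 1)) : (Ψ v).1 = ⟪v, u⟫
  norm_sq_eq (v : Euc (k + 1)) : ‖v‖ ^ 2 = ⟪v, u⟫ ^ 2 + ‖(Ψ v).2‖ ^ 2

theorem exists_isOrthogonalSplitting (hu : ‖u‖ = 1) : ∃ Ψ, IsOrthogonalSplitting u Ψ := by
  have hon : Orthonormal ℝ (({0} : Set (Fin (k + 1))).domRestrict fun _ => u) := by
    rw [orthonormal_iff_ite]
    rintro ⟨i, rfl⟩ ⟨j, rfl⟩
    simp [hu]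
  obtain ⟨b, hb⟩ := hon.exists_orthonormalBasis_extension_of_card_eq (by simp)
  have hb0 : b 0 = u := hb 0 rfl
  let Ψ : Euc (k + 1) ≃L[ℝ] ℝ × Euc k :=
    b.repr.toContinuousLinearEquiv.trans <| (EuclideanSpace.equiv _ ℝ).trans <|
      (Fin.consEquivL ℝ fun _ => ℝ).symm.trans <|
        (ContinuousLinearEquiv.refl ℝ ℝ).prodCongr (EuclideanSpace.equiv _ ℝ).symm
  have hfst (v) : (Ψ v).1 = ⟪v, u⟫ := by
    rw [← hb0, real_inner_comm]
    exact b.repr_apply_apply v 0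
  refine ⟨Ψ, ?_, hfst, fun v => ?_⟩
  · exact (((MeasurePreserving.id volume).prod (PiLp.volume_preserving_toLp (Fin k))).comp
      (volume_preserving_piFinSuccAbove (fun _ => ℝ) 0)).comp
      ((PiLp.volume_preserving_ofLp (Fin (k + 1))).comp b.repr.measurePreserving)
  · rw [← b.repr.norm_map v, EuclideanSpace.norm_sq_eq, EuclideanSpace.norm_sq_eq,
      Fin.sum_univ_succ, ← hfst, Real.norm_eq_abs, sq_abs]
    rfl

theorem IsOrthogonalSplitting.norm_snd_le {Ψ : Euc (k + 1) ≃L[ℝ] ℝ × Euc k}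
    (hΨ : IsOrthogonalSplitting u Ψ) (v : Euc (k + 1)) : ‖(Ψ v).2‖ ≤ ‖v‖ :=
  (sq_le_sq₀ (norm_nonneg _) (norm_nonneg _)).1 <| by
    rw [hΨ.norm_sq_eq v]
    exact le_add_of_nonneg_left (sq_nonneg _)

theorem IsOrthogonalSplitting.norm_le_abs_add {Ψ : Euc (k + 1) ≃L[ℝ] ℝ × Euc k}
    (hΨ : IsOrthogonalSplitting u Ψ) (v : Euc (k + 1)) : ‖v‖ ≤ |⟪v, u⟫| + ‖(Ψ v).2‖ := by
  refine (sq_le_sq₀ (norm_nonneg _) (by positivity)).1 ?_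
  rw [hΨ.norm_sq_eq v, add_sq, sq_abs, add_right_comm]
  exact le_add_of_nonneg_right (by positivity)

theorem IsOrthogonalSplitting.symm_add_smul {Ψ : Euc (k + 1) ≃L[ℝ] ℝ × Euc k}
    (hΨ : IsOrthogonalSplitting u Ψ) (hu : ‖u‖ = 1) (s t : ℝ) (q : Euc k) :
    Ψ.symm (s, q) + t • u = Ψ.symm (s + t, q) := by
  have hfst : (Ψ u).1 = 1 := by rw [hΨ.fst_apply, real_inner_self_eq_norm_sq, hu, one_pow]
  have hsnd : (Ψ u).2 = 0 := by
    simpa [real_inner_self_eq_norm_sq, hu] using hΨ.norm_sq_eq u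
  rw [Ψ.eq_symm_apply, map_add, map_smul, Ψ.apply_symm_apply]
  ext : 1 <;> simp [hfst, hsnd]

/-- Shearing an orthogonal splitting along the hyperplane `u^⊥` sends `w` to a multiple of the
first basis vector without affecting volumes. -/
theorem exists_oblique_splitting (hu : ‖u‖ = 1) (hw : 0 < ⟪w, u⟫) :
    ∃ Ψ : Euc (k + 1) ≃L[ℝ] ℝ × Euc k, MeasurePreserving Ψ ∧ (∀ v, (Ψ v).1 = ⟪v, u⟫) ∧
      (Ψ w).2 = 0 ∧ ∀ v, ‖v‖ ≤ ‖(Ψ v).2‖ + (1 + ‖w‖ / ⟪w, u⟫) * |⟪v, u⟫| := by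
  obtain ⟨Ψ, hΨ⟩ := exists_isOrthogonalSplitting hu
  set c : Euc k := -(⟪w, u⟫⁻¹ • (Ψ w).2) with hc
  have hc_le : ‖c‖ ≤ ‖w‖ / ⟪w, u⟫ := by
    rw [hc, norm_neg, norm_smul, norm_inv, Real.norm_of_nonneg hw.le, inv_mul_eq_div]
    gcongr
    exact hΨ.norm_snd_le w
  let shear : (ℝ × Euc k) ≃L[ℝ] ℝ × Euc k :=
    .skewProd (.refl ℝ ℝ) (.refl ℝ _) ((ContinuousLinearMap.id ℝ ℝ).smulRight c)
  have hsnd (v) : ((Ψ.trans shear) v).2 = (Ψ v).2 + ⟪v, u⟫ • c := by simp [shear, hΨ.fst_apply]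
  have hshear : MeasurePreserving shear :=
    (MeasurePreserving.id volume).skew_product (g := fun a b => b + a • c)
      (by unfold Function.uncurry; fun_prop)
      (.of_forall fun a => (measurePreserving_add_right volume _).map_eq)
  refine ⟨Ψ.trans shear, hshear.comp hΨ.measurePreserving, hΨ.fst_apply, ?_, fun v => ?_⟩
  · rw [hsnd, hc, smul_neg, smul_inv_smul₀ hw.ne', add_neg_cancel]
  · have h : ‖(Ψ v).2‖ ≤ ‖(Ψ v).2 + ⟪v, u⟫ • c‖ + |⟪v, u⟫| * (‖w‖ / ⟪w, u⟫) :=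
      calc ‖(Ψ v).2‖ = ‖(Ψ v).2 + ⟪v, u⟫ • c - ⟪v, u⟫ • c‖ := by rw [add_sub_cancel_right]
        _ ≤ ‖(Ψ v).2 + ⟪v, u⟫ • c‖ + |⟪v, u⟫| * ‖c‖ := by
          rw [← Real.norm_eq_abs, ← norm_smul]
          exact norm_sub_le _ _
        _ ≤ _ := by gcongr
    rw [hsnd]
    linarith [hΨ.norm_le_abs_add v]

theorem volume_eq_lintegral_fiber {Ψ : Euc (k + 1) ≃L[ℝ] ℝ × Euc k} (hΨ : MeasurePreserving Ψ)
    {Z : Set (Euc (k + 1))} (hZ : IsCompact Z) :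
    volume Z = ∫⁻ q, volume {s : ℝ | Ψ.symm (s, q) ∈ Z} := by
  have hm : MeasurableSet (Ψ.symm ⁻¹' Z) := Ψ.symm.continuous.measurable hZ.measurableSet
  calc volume Z = volume (Ψ ⁻¹' (Ψ.symm ⁻¹' Z)) := by
        rw [← preimage_comp, Ψ.symm_comp_self, preimage_id]
    _ = volume (Ψ.symm ⁻¹' Z) := hΨ.measure_preimage hm.nullMeasurableSet
    _ = _ := Measure.prod_apply_symm hm

end Splitting

/-! ### Hausdorff measure -/

section Hausdorff

variable {X Y : Type*} [EMetricSpace X] [EMetricSpace Y]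

theorem hausdorffMeasure_le_mul_image_of_edist_le [MeasurableSpace X] [BorelSpace X]
    [MeasurableSpace Y] [BorelSpace Y] {K : NNReal} {f : X → Y} {s : Set X} {d : ℝ} (hd : 0 ≤ d)
    (h : ∀ x ∈ s, ∀ y ∈ s, edist x y ≤ K * edist (f x) (f y)) :
    μH[d] s ≤ K ^ d * μH[d] (f '' s) := by
  have hanti : AntilipschitzWith K (s.domRestrict f) := fun x y => h x x.2 y y.2
  have hle := hanti.le_hausdorffMeasure_image hd univ
  rwa [image_univ, range_domRestrict,
    ← (isometry_subtype_coe (s := s)).hausdorffMeasure_image (Or.inl hd), image_univ,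
    Subtype.range_coe] at hle

theorem dimH_le_dimH_image_of_edist_le {K : NNReal} {f : X → Y} {s : Set X}
    (h : ∀ x ∈ s, ∀ y ∈ s, edist x y ≤ K * edist (f x) (f y)) : dimH s ≤ dimH (f '' s) := by
  have hanti : AntilipschitzWith K (s.domRestrict f) := fun x y => h x x.2 y y.2
  have hle := hanti.le_dimH_image univ
  rwa [image_univ, range_domRestrict, ← (isometry_subtype_coe (s := s)).dimH_image, image_univ,
    Subtype.range_coe] at hle

theorem edist_le_toNNReal_mul_edist_map {E F : Type*} [NormedAddCommGroup E]
    [NormedAddCommGroup F] [NormedSpace ℝ E] [NormedSpace ℝ F] {C : ℝ} (hC : 0 ≤ C) {P : E →L[ℝ] F}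
    {x y : E} (h : ‖x - y‖ ≤ C * ‖P (x - y)‖) :
    edist x y ≤ C.toNNReal * edist (P x) (P y) := by
  rw [edist_dist, edist_dist, dist_eq_norm, dist_eq_norm, ← map_sub, ← ENNReal.ofReal,
    ← ENNReal.ofReal_mul hC]
  exact ENNReal.ofReal_le_ofReal h

end Hausdorff

/-- The ratio of Lebesgue measure to Hausdorff measure on `k`-dimensional Euclidean space, needed
because Mathlib's `μH[k]` is not normalized to agree with Lebesgue measure. -/
def hausdorffFactor (k : ℕ) : NNReal :=
  Measure.addHaarScalarFactor (volume : Measure (Euc k)) μH[k]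

theorem volume_eq_hausdorffFactor_mul {k : ℕ} (s : Set (Euc k)) :
    volume s = hausdorffFactor k * μH[k] s := by
  have := Measure.isAddLeftInvariant_eq_smul (volume : Measure (Euc k)) μH[k]
  exact congrArg (fun μ : Measure (Euc k) => μ s) this

/-! ### Outward normals -/

/-- The boundary points of `K` having an outward unit normal in `C`, i.e. the reverse spherical
image of `C`. -/
def normalPts {m : ℕ} (K C : Set (Euc m)) : Set (Euc m) :=
  {x | ∃ n ∈ C, IsOutwardNormalAt K x n}

/-- The boundary points of `K` having more than one outward unit normal. -/
def singularPts {m : ℕ} (K : Set (Euc m)) : Set (Euc m) :=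
  {x | ∃ n n', IsOutwardNormalAt K x n ∧ IsOutwardNormalAt K x n' ∧ n ≠ n'}

section Normals

variable {m : ℕ} {K C : Set (Euc m)} {x y n n' u : Euc m} {δ : ℝ}

theorem IsConvexBody.frontier_subset (hK : IsConvexBody K) : frontier K ⊆ K :=
  hK.2.1.isClosed.frontier_subset

theorem IsConvexBody.isCompact_frontier (hK : IsConvexBody K) : IsCompact (frontier K) :=
  hK.2.1.of_isClosed_subset isClosed_frontier hK.frontier_subset

theorem IsConvexBody.exists_isOutwardNormalAt (hK : IsConvexBody K) (hx : x ∈ frontier K) :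
    ∃ n, IsOutwardNormalAt K x n := by
  obtain ⟨f, hf⟩ := geometric_hahn_banach_open_point hK.1.interior isOpen_interior hx.2
  have hle : closure (interior K) ⊆ {y | f y ≤ f x} :=
    closure_minimal (fun y hy => (hf y hy).le) (isClosed_le f.continuous continuous_const)
  rw [hK.1.closure_interior_eq_closure_of_nonempty_interior hK.2.2] at hle
  set v := (InnerProductSpace.toDual ℝ (Euc m)).symm f
  have hv (y) : f y = ⟪v, y⟫ := InnerProductSpace.toDual_symm_apply.symm
  have hv0 : v ≠ 0 := by
    rintro h0
    obtain ⟨y, hy⟩ := hK.2.2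
    simpa [hv, h0] using hf y hy
  refine ⟨‖v‖⁻¹ • v, hx, norm_smul_inv_norm hv0, fun y hy => ?_⟩
  rw [inner_smul_right, real_inner_comm, inner_sub_right, ← hv, ← hv]
  exact mul_nonpos_of_nonneg_of_nonpos (by positivity) (sub_nonpos.2 (hle (subset_closure hy)))

theorem IsConvexBody.isOutwardNormalAt_gaussMap (hK : IsConvexBody K) (hx : x ∈ frontier K) :
    IsOutwardNormalAt K x (gaussMap K x) := by
  have h := hK.exists_isOutwardNormalAt hx
  rw [gaussMap, dif_pos h]
  exact h.choose_spec

theorem IsOutwardNormalAt.inner_sub_neg (hn : IsOutwardNormalAt K x n) (hy : y ∈ interior K) :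
    ⟪y - x, n⟫ < 0 := by
  have hc : ContinuousAt (fun s : ℝ => y + s • n) 0 := by fun_prop
  have hnear : ∀ᶠ s in 𝓝[>] (0 : ℝ), y + s • n ∈ interior K :=
    (hc.tendsto.mono_left nhdsWithin_le_nhds).eventually_mem
      (by simpa using isOpen_interior.mem_nhds hy)
  obtain ⟨s, hs, hs0 : 0 < s⟩ := (hnear.and self_mem_nhdsWithin).exists
  have h := hn.2.2 _ (interior_subset hs)
  rw [add_sub_right_comm, inner_add_left, real_inner_smul_left, real_inner_self_eq_norm_sq,
    hn.2.1] at h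
  linarith

theorem IsOutwardNormalAt.linearIndependent (hK : IsConvexBody K) (hn : IsOutwardNormalAt K x n)
    (hn' : IsOutwardNormalAt K x n') (hne : n ≠ n') : LinearIndependent ℝ ![n, n'] := by
  rw [LinearIndependent.pair_iff' fun h => by simpa [h] using hn.2.1]
  rintro a rfl
  have ha : |a| = 1 := by simpa [norm_smul, hn.2.1] using hn'.2.1
  obtain ⟨y, hy⟩ := hK.2.2
  have hneg' := hn'.inner_sub_neg hy
  rw [real_inner_smul_right] at hneg'
  have ha0 : 0 < a := pos_of_mul_neg_left hneg' (hn.inner_sub_neg hy).le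
  rw [abs_of_pos ha0] at ha
  exact hne (by rw [ha, one_smul])

theorem real_inner_le_inner_add_mul_norm {E : Type*} [NormedAddCommGroup E]
    [InnerProductSpace ℝ E] {u v : E} (h : ‖v - u‖ ≤ δ) (w : E) :
    ⟪w, u⟫ ≤ ⟪w, v⟫ + δ * ‖w‖ :=
  calc ⟪w, u⟫ = ⟪w, v⟫ + ⟪w, u - v⟫ := by rw [inner_sub_right, add_sub_cancel]
    _ ≤ ⟪w, v⟫ + ‖w‖ * ‖u - v‖ := by
      gcongr
      exact real_inner_le_norm _ _
    _ ≤ ⟪w, v⟫ + δ * ‖w‖ := by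
      rw [mul_comm, norm_sub_rev]
      gcongr

theorem IsOutwardNormalAt.inner_sub_le (hn : IsOutwardNormalAt K x n) (hy : y ∈ K)
    (hnu : ‖n - u‖ ≤ δ) : ⟪y - x, u⟫ ≤ δ * ‖y - x‖ :=
  (real_inner_le_inner_add_mul_norm hnu _).trans (add_le_of_nonpos_left (hn.2.2 y hy))

theorem normalPts_subset_frontier : normalPts K C ⊆ frontier K := by
  rintro x ⟨n, -, hn⟩
  exact hn.1

theorem IsConvexBody.isCompact_normalPts (hK : IsConvexBody K) (hC : IsClosed C) :
    IsCompact (normalPts K C) := by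
  have hc : IsCompact ((frontier K ×ˢ (Metric.sphere (0 : Euc m) 1 ∩ C)) ∩
      {q : Euc m × Euc m | ∀ y ∈ K, ⟪y - q.1, q.2⟫ ≤ 0}) := by
    refine (hK.isCompact_frontier.prod ((isCompact_sphere 0 1).inter_right hC)).inter_right ?_
    simp only [ofPred_forall]
    exact isClosed_biInter fun y _ => isClosed_le (by fun_prop) continuous_const
  convert hc.image continuous_fst using 1
  ext x
  constructor
  · rintro ⟨n, hn, h1, h2, h3⟩
    exact ⟨(x, n), ⟨⟨h1, mem_sphere_zero_iff_norm.2 h2, hn⟩, h3⟩, rfl⟩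
  · rintro ⟨⟨x, n⟩, ⟨⟨h1, h2, hn⟩, h3⟩, rfl⟩
    exact ⟨n, hn, h1, mem_sphere_zero_iff_norm.1 h2, h3⟩

theorem IsConvexBody.abs_inner_sub_le_of_mem_normalPts (hK : IsConvexBody K)
    (hC : C ⊆ Metric.closedBall u δ) (hx : x ∈ normalPts K C) (hy : y ∈ normalPts K C) :
    |⟪x - y, u⟫| ≤ δ * ‖x - y‖ := by
  obtain ⟨n, hn, hnx⟩ := hx
  obtain ⟨n', hn', hny⟩ := hy
  have hyx := hnx.inner_sub_le (hK.frontier_subset hny.1) (mem_closedBall_iff_norm.1 (hC hn))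
  have hxy := hny.inner_sub_le (hK.frontier_subset hnx.1) (mem_closedBall_iff_norm.1 (hC hn'))
  rw [← neg_sub x y, inner_neg_left, norm_neg] at hyx
  exact abs_le.2 ⟨neg_le.1 hyx, hxy⟩

end Normals

/-! ### Uniqueness of the normal almost everywhere -/

section Uniqueness

variable {k : ℕ} {K : Set (Euc (k + 1))}

theorem exists_norm_le_mul_max_of_span_pair {E : Type*} [NormedAddCommGroup E]
    [InnerProductSpace ℝ E] [FiniteDimensional ℝ E] (u v : E) :
    ∃ C > 0, ∀ w : E, ‖w‖ ≤ C * max ‖(Submodule.span ℝ {u, v})ᗮ.orthogonalProjectionOnto w‖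
      (max |⟪w, u⟫| |⟪w, v⟫|) := by
  set W := Submodule.span ℝ {u, v} with hW
  let T : E →L[ℝ] Wᗮ × ℝ × ℝ :=
    Wᗮ.orthogonalProjectionOnto.prod ((innerSL ℝ u).prod (innerSL ℝ v))
  have hker : LinearMap.ker (T : E →ₗ[ℝ] Wᗮ × ℝ × ℝ) = ⊥ := by
    refine LinearMap.ker_eq_bot'.2 fun w (hw : T w = 0) => ?_
    simp only [T, ContinuousLinearMap.prod_apply, Prod.mk_eq_zero, innerSL_apply_apply] at hw
    obtain ⟨hPw, huw, hvw⟩ := hw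
    rw [Submodule.orthogonalProjectionOnto_eq_zero_iff, Submodule.orthogonal_orthogonal, hW,
      Submodule.mem_span_pair] at hPw
    obtain ⟨a, b, hab⟩ := hPw
    rw [← inner_self_eq_zero (𝕜 := ℝ)]
    conv_lhs => rw [← hab, inner_add_left, inner_smul_left, inner_smul_left, hab, huw, hvw]
    simp
  obtain ⟨C, hC0, hC⟩ := T.toLinearMap.exists_antilipschitzWith hker
  refine ⟨C, hC0, fun w => (hC.le_mul_norm (map_zero _) w).trans_eq ?_⟩
  simp [T, Prod.norm_def, real_inner_comm]

theorem IsConvexBody.exists_hausdorffMeasure_normalPts_inter_eq_zero (hK : IsConvexBody K)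
    {u v : Euc (k + 1)} (huv : LinearIndependent ℝ ![u, v]) :
    ∃ δ > 0, μH[k] (normalPts K (Metric.ball u δ) ∩ normalPts K (Metric.ball v δ)) = 0 := by
  obtain ⟨C, hC0, hC⟩ := exists_norm_le_mul_max_of_span_pair u v
  set W := Submodule.span ℝ {u, v} with hW
  have hdim : Module.finrank ℝ Wᗮ < k := by
    have hW2 : Module.finrank ℝ W = 2 := by
      rw [hW, ← Matrix.range_cons_cons_empty u v ![], finrank_span_eq_card huv, Fintype.card_fin]
    have hadd := W.finrank_add_finrank_orthogonal
    rw [hW2, finrank_euclideanSpace_fin] at hadd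
    omega
  refine ⟨1 / (2 * C), by positivity, ?_⟩
  set A := normalPts K (Metric.ball u (1 / (2 * C))) ∩ normalPts K (Metric.ball v (1 / (2 * C)))
  suffices hA : dimH A < (k : NNReal) by simpa using hausdorffMeasure_of_dimH_lt hA
  have hexpand : ∀ x ∈ A, ∀ y ∈ A, ‖x - y‖ ≤ C * ‖Wᗮ.orthogonalProjectionOnto (x - y)‖ := by
    rintro x ⟨hxu, hxv⟩ y ⟨hyu, hyv⟩
    have hu := hK.abs_inner_sub_le_of_mem_normalPts Metric.ball_subset_closedBall hxu hyu
    have hv := hK.abs_inner_sub_le_of_mem_normalPts Metric.ball_subset_closedBall hxv hyv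
    have hhalf : C * (1 / (2 * C) * ‖x - y‖) = ‖x - y‖ / 2 := by field_simp
    have hle := (hC (x - y)).trans
      (mul_le_mul_of_nonneg_left (max_le_max_left _ (max_le hu hv)) hC0.le)
    rw [mul_max_of_nonneg _ _ hC0.le, hhalf] at hle
    rcases le_max_iff.1 hle with h | h
    · exact h
    · exact (by linarith [norm_nonneg (x - y)] : ‖x - y‖ ≤ 0).trans (by positivity)
  calc dimH A ≤ dimH (Wᗮ.orthogonalProjectionOnto '' A) :=
        dimH_le_dimH_image_of_edist_le fun x hx y hy =>
          edist_le_toNNReal_mul_edist_map hC0.le (hexpand x hx y hy)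
    _ ≤ dimH (univ : Set Wᗮ) := dimH_mono (subset_univ _)
    _ = Module.finrank ℝ Wᗮ := Real.dimH_univ_eq_finrank _
    _ < (k : NNReal) := by exact_mod_cast hdim

theorem IsConvexBody.hausdorffMeasure_singularPts (hK : IsConvexBody K) :
    μH[k] (singularPts K) = 0 := by
  choose! δ hδ using fun q : Euc (k + 1) × Euc (k + 1) =>
    hK.exists_hausdorffMeasure_normalPts_inter_eq_zero (u := q.1) (v := q.2)
  obtain ⟨t, htQ, htc, hcov⟩ := TopologicalSpace.countable_cover_nhdsWithin
    (s := {q : Euc (k + 1) × Euc (k + 1) | LinearIndependent ℝ ![q.1, q.2]})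
    (f := fun q => Metric.ball q.1 (δ q) ×ˢ Metric.ball q.2 (δ q)) fun q hq =>
      mem_nhdsWithin_of_mem_nhds (prod_mem_nhds (Metric.ball_mem_nhds _ (hδ q hq).1)
        (Metric.ball_mem_nhds _ (hδ q hq).1))
  refine measure_mono_null (t := ⋃ q ∈ t, normalPts K (Metric.ball q.1 (δ q)) ∩
    normalPts K (Metric.ball q.2 (δ q))) ?_ ((measure_biUnion_null_iff htc).2 fun q hq =>
      (hδ q (htQ hq)).2)
  rintro x ⟨n, n', hn, hn', hne⟩
  obtain ⟨q, hq, h1, h2⟩ := mem_iUnion₂.1 (hcov (show (n, n') ∈ _ from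
    hn.linearIndependent hK hn' hne))
  exact mem_iUnion₂.2 ⟨q, hq, ⟨n, h1, hn⟩, ⟨n', h2, hn'⟩⟩

end Uniqueness

/-! ### The surface area measure -/

section SurfaceAreaMeasure

variable {k : ℕ} {K D E : Set (Euc (k + 1))}

theorem IsConvexBody.hausdorffMeasure_frontier_lt_top (hK : IsConvexBody K) :
    μH[k] (frontier K) < ∞ := by
  obtain ⟨t, ht, htf, hcov⟩ := (isCompact_sphere (0 : Euc (k + 1)) 1).elim_finite_subcover_image
    (b := Metric.sphere (0 : Euc (k + 1)) 1) (c := fun u => Metric.ball u (1 / 2))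
    (fun _ _ => Metric.isOpen_ball)
    (fun u hu => mem_iUnion₂.2 ⟨u, hu, Metric.mem_ball_self (by norm_num)⟩)
  have hsub : frontier K ⊆ ⋃ u ∈ t, normalPts K (Metric.ball u (1 / 2)) := by
    intro x hx
    obtain ⟨n, hn⟩ := hK.exists_isOutwardNormalAt hx
    obtain ⟨u, hu, hnu⟩ := mem_iUnion₂.1 (hcov (mem_sphere_zero_iff_norm.2 hn.2.1))
    exact mem_iUnion₂.2 ⟨u, hu, n, hnu, hn⟩
  refine (measure_mono hsub).trans_lt (measure_biUnion_lt_top htf fun u hu => ?_)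
  obtain ⟨Ψ, hΨ⟩ := exists_isOrthogonalSplitting (mem_sphere_zero_iff_norm.1 (ht hu))
  set A := normalPts K (Metric.ball u (1 / 2))
  let P : Euc (k + 1) →L[ℝ] Euc k := .comp (.snd ℝ ℝ _) (Ψ : Euc (k + 1) →L[ℝ] ℝ × Euc k)
  have hexpand : ∀ x ∈ A, ∀ y ∈ A, ‖x - y‖ ≤ 2 * ‖P (x - y)‖ := fun x hx y hy => by
    have hle : ‖x - y‖ ≤ |⟪x - y, u⟫| + ‖P (x - y)‖ := hΨ.norm_le_abs_add (x - y)
    have habs := hK.abs_inner_sub_le_of_mem_normalPts Metric.ball_subset_closedBall hx hy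
    linarith
  have hA : P '' A ⊆ P '' K := image_mono (normalPts_subset_frontier.trans hK.frontier_subset)
  calc μH[k] A ≤ ((2 : ℝ).toNNReal : ℝ≥0∞) ^ (k : ℝ) * μH[k] (P '' A) :=
        hausdorffMeasure_le_mul_image_of_edist_le k.cast_nonneg fun x hx y hy =>
          edist_le_toNNReal_mul_edist_map zero_le_two (hexpand x hx y hy)
    _ < ∞ := ENNReal.mul_lt_top
        (ENNReal.rpow_lt_top_of_nonneg k.cast_nonneg ENNReal.coe_ne_top)
        ((measure_mono hA).trans_lt (hK.2.1.image P.continuous).measure_lt_top)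

/-- Off the null set of singular points, the preimage of a closed set under the Gauss map is
compact. -/
theorem IsConvexBody.aemeasurable_gaussMap (hK : IsConvexBody K) :
    AEMeasurable (gaussMap K) (μH[k].restrict (frontier K)) := by
  set B := toMeasurable μH[k] (singularPts K)
  have hB0 : μH[k] B = 0 := (measure_toMeasurable _).trans hK.hausdorffMeasure_singularPts
  have hBm : MeasurableSet B := measurableSet_toMeasurable _ _
  have hF : MeasurableSet (frontier K \ B) := isClosed_frontier.measurableSet.diff hBm
  have hpre (C) : gaussMap K ⁻¹' C ∩ (frontier K \ B) = normalPts K C \ B := by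
    ext x
    constructor
    · rintro ⟨h1, h2, h3⟩
      exact ⟨⟨_, h1, hK.isOutwardNormalAt_gaussMap h2⟩, h3⟩
    · rintro ⟨⟨n, hn, hx⟩, hxB⟩
      refine ⟨?_, hx.1, hxB⟩
      by_contra hxC
      exact hxB (subset_toMeasurable _ _ ⟨_, _, hx, hK.isOutwardNormalAt_gaussMap hx.1,
        fun h => hxC (mem_preimage.2 (h ▸ hn))⟩)
  classical
  refine ⟨(frontier K \ B).indicator (gaussMap K), measurable_of_isClosed fun C hC => ?_, ?_⟩
  · rw [indicator_preimage, Set.ite, hpre]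
    exact ((hK.isCompact_normalPts hC).measurableSet.diff hBm).union
      ((measurable_zero hC.measurableSet).diff hF)
  · filter_upwards [ae_restrict_of_ae (measure_eq_zero_iff_ae_notMem.1 hB0),
      ae_restrict_mem isClosed_frontier.measurableSet] with x hxB hx
    rw [indicator_of_mem (show x ∈ frontier K \ B from ⟨hx, hxB⟩)]

theorem surfMeasure_eq_map (K : Set (Euc (k + 1))) :
    surfMeasure K = (μH[k].restrict (frontier K)).map (gaussMap K) := by
  rw [surfMeasure, Nat.cast_succ, add_sub_cancel_right]

theorem IsConvexBody.surfMeasure_apply (hK : IsConvexBody K) (hE : MeasurableSet E) :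
    surfMeasure K E = μH[k].restrict (frontier K) (gaussMap K ⁻¹' E) := by
  rw [surfMeasure_eq_map, Measure.map_apply_of_aemeasurable hK.aemeasurable_gaussMap hE]

theorem IsConvexBody.surfMeasure_eq_hausdorffMeasure_normalPts (hK : IsConvexBody K)
    (hD : IsClosed D) : surfMeasure K D = μH[k] (normalPts K D) := by
  rw [hK.surfMeasure_apply hD.measurableSet,
    Measure.restrict_apply₀' isClosed_frontier.measurableSet.nullMeasurableSet]
  refine le_antisymm (measure_mono fun x hx => ⟨_, hx.1, hK.isOutwardNormalAt_gaussMap hx.2⟩) ?_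
  have hsub : normalPts K D ⊆ (gaussMap K ⁻¹' D ∩ frontier K) ∪ singularPts K := by
    rintro x ⟨n, hn, hx⟩
    by_cases h : gaussMap K x ∈ D
    · exact Or.inl ⟨h, hx.1⟩
    · exact Or.inr ⟨_, _, hx, hK.isOutwardNormalAt_gaussMap hx.1, fun e => h (e ▸ hn)⟩
  calc μH[k] (normalPts K D)
      ≤ μH[k] (gaussMap K ⁻¹' D ∩ frontier K) + μH[k] (singularPts K) :=
        (measure_mono hsub).trans (measure_union_le _ _)
    _ = _ := by rw [hK.hausdorffMeasure_singularPts, add_zero]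

theorem IsConvexBody.isFiniteMeasure_surfMeasure (hK : IsConvexBody K) :
    IsFiniteMeasure (surfMeasure K) := by
  have : IsFiniteMeasure (μH[k].restrict (frontier K)) :=
    isFiniteMeasure_restrict.2 hK.hausdorffMeasure_frontier_lt_top.ne
  rw [surfMeasure_eq_map]
  infer_instance

theorem IsConvexBody.ae_norm_eq_one (hK : IsConvexBody K) : ∀ᵐ n ∂surfMeasure K, ‖n‖ = 1 := by
  rw [surfMeasure_eq_map]
  refine (ae_map_iff hK.aemeasurable_gaussMap
    (isClosed_eq continuous_norm continuous_const).measurableSet).2 ?_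
  filter_upwards [ae_restrict_mem isClosed_frontier.measurableSet] with x hx
  exact (hK.isOutwardNormalAt_gaussMap hx).2.1

theorem IsConvexBody.exists_isCompact_subset_preimage_gaussMap (hK : IsConvexBody K)
    (hE : MeasurableSet E) {ε : ℝ} (hε : 0 < ε) :
    ∃ X ⊆ gaussMap K ⁻¹' E ∩ frontier K, IsCompact X ∧
      (surfMeasure K).real E - ε ≤ (μH[k] : Measure (Euc (k + 1))).real X := by
  set μ : Measure (Euc (k + 1)) := μH[k].restrict (frontier K) with hμ
  have : IsFiniteMeasure μ := isFiniteMeasure_restrict.2 hK.hausdorffMeasure_frontier_lt_top.ne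
  have hpre := hK.aemeasurable_gaussMap.nullMeasurableSet_preimage hE
  obtain ⟨A, hA, hAm, hAE⟩ := (hpre.inter isClosed_frontier.nullMeasurableSet
    ).exists_measurable_subset_ae_eq
  have hA_real : (surfMeasure K).real E = μ.real A := by
    rw [measureReal_congr hAE, Measure.real, Measure.real, hK.surfMeasure_apply hE,
      Measure.restrict_apply₀' isClosed_frontier.nullMeasurableSet,
      Measure.restrict_apply₀' isClosed_frontier.nullMeasurableSet, inter_assoc, inter_self]
  obtain ⟨X, hXA, hXc, hX⟩ := hAm.exists_isCompact_lt_add (μ := μ) (measure_ne_top _ _)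
    (ENNReal.ofReal_pos.2 hε).ne'
  refine ⟨X, hXA.trans hA, hXc, ?_⟩
  have hXμ : μ X = μH[k] X := by
    rw [hμ, Measure.restrict_apply hXc.measurableSet,
      inter_eq_left.2 fun x hx => (hA (hXA hx)).2]
  have h := ENNReal.toReal_mono (by finiteness) hX.le
  rw [ENNReal.toReal_add (by finiteness) (by finiteness), ENNReal.toReal_ofReal hε.le, hXμ] at h
  rw [hA_real, sub_le_iff_le_add]
  exact h

end SurfaceAreaMeasure

/-! ### Fine partitions of compact sets -/

section Partition

variable {X ι : Type*} [PseudoMetricSpace X] [MeasurableSpace X] {μ : Measure X} {S : Set X}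
  {δ : ℝ} {u : ι → X} {E : ι → Set X}

/-- `E` is a family of disjoint pieces covering `S`, with the piece `E i` within distance `δ` of
the point `u i` of `S`, and with `μ`-null frontiers. The last condition allows passing to the
closures of the pieces. -/
structure IsFinePartition (μ : Measure X) (S : Set X) (δ : ℝ) (u : ι → X) (E : ι → Set X) :
    Prop where
  mem (i : ι) : u i ∈ S
  measurableSet (i : ι) : MeasurableSet (E i)
  pairwise_disjoint : Pairwise (Function.onFun Disjoint E)
  subset_closedBall (i : ι) : E i ⊆ Metric.closedBall (u i) δ
  subset_iUnion : S ⊆ ⋃ i, E i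
  measure_frontier (i : ι) : μ (frontier (E i)) = 0

theorem exists_isFinePartition [OpensMeasurableSpace X] (μ : Measure X) [SigmaFinite μ]
    (hS : IsCompact S) (hδ : 0 < δ) :
    ∃ (n : ℕ) (u : Fin n → X) (E : Fin n → Set X), IsFinePartition μ S δ u E := by
  choose r hr hμr using fun x : X => exists_null_frontier_thickening μ {x} hδ
  simp only [Metric.thickening_singleton] at hμr
  obtain ⟨T, hT, hcov⟩ := hS.elim_nhds_subcover (fun x => Metric.ball x (r x))
    fun x _ => Metric.ball_mem_nhds x (hr x).1
  let u (i : Fin T.card) : X := T.equivFin.symm i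
  let B (i : Fin T.card) : Set X := Metric.ball (u i) (r (u i))
  have hnull (i) : μ (frontier (disjointed B i)) = 0 := by
    refine disjointedRec (f := B) (p := fun t => μ (frontier t) = 0) (fun t j ht => ?_) (hμr _)
    refine measure_mono_null (t := frontier t ∪ frontier (B j)) ?_ (measure_union_null ht (hμr _))
    rw [sdiff_eq, ← frontier_compl (B j)]
    exact (frontier_inter_subset _ _).trans
      (union_subset_union inter_subset_left inter_subset_right)
  exact ⟨T.card, u, disjointed B,
    { mem := fun i => hT _ (T.equivFin.symm i).2
      measurableSet := fun i => disjointedRec (f := B) (p := MeasurableSet)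
        (fun _ _ ht => ht.diff measurableSet_ball) measurableSet_ball
      pairwise_disjoint := disjoint_disjointed B
      subset_closedBall := fun i => (disjointed_subset B i).trans
        (Metric.ball_subset_closedBall.trans (Metric.closedBall_subset_closedBall (hr _).2.le))
      subset_iUnion := fun x hx => by
        obtain ⟨v, hv, hxv⟩ := mem_iUnion₂.1 (hcov hx)
        rw [iUnion_disjointed]
        exact mem_iUnion.2 ⟨T.equivFin ⟨v, hv⟩, by simpa [B, u] using hxv⟩
      measure_frontier := hnull }⟩

theorem IsFinePartition.abs_integral_sub_sum_le [Fintype ι] [IsFiniteMeasure μ]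
    (hE : IsFinePartition μ S δ u E) (hS : ∀ᵐ x ∂μ, x ∈ S) {C : NNReal} {f : X → ℝ}
    (hf : LipschitzWith C f) (hfi : Integrable f μ) :
    |∫ x, f x ∂μ - ∑ i, f (u i) * μ.real (E i)| ≤ C * δ * μ.real univ := by
  have hcov : ⋃ i, E i =ᵐ[μ] univ :=
    Filter.eventuallyEq_univ.2 (hS.mono fun x hx => hE.subset_iUnion hx)
  have hint : ∫ x, f x ∂μ = ∑ i, ∫ x in E i, f x ∂μ := by
    rw [← integral_iUnion_fintype hE.measurableSet hE.pairwise_disjoint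
      fun i => hfi.integrableOn, setIntegral_congr_set hcov, setIntegral_univ]
  have hpiece (i) : |∫ x in E i, f x ∂μ - f (u i) * μ.real (E i)| ≤ C * δ * μ.real (E i) := by
    have hsub : ∫ x in E i, f x ∂μ - f (u i) * μ.real (E i) = ∫ x in E i, (f x - f (u i)) ∂μ := by
      rw [integral_sub hfi.integrableOn (integrable_const _), setIntegral_const, smul_eq_mul,
        mul_comm]
    rw [hsub, ← Real.norm_eq_abs]
    refine norm_setIntegral_le_of_norm_le_const (measure_lt_top _ _) fun x hx => ?_
    rw [← dist_eq_norm]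
    exact (hf.dist_le_mul x (u i)).trans (by gcongr; exact hE.subset_closedBall i hx)
  calc |∫ x, f x ∂μ - ∑ i, f (u i) * μ.real (E i)|
      ≤ ∑ i, |∫ x in E i, f x ∂μ - f (u i) * μ.real (E i)| := by
        rw [hint, ← Finset.sum_sub_distrib]
        exact Finset.abs_sum_le_sum_abs _ _
    _ ≤ ∑ i, C * δ * μ.real (E i) := Finset.sum_le_sum fun i _ => hpiece i
    _ = C * δ * μ.real univ := by
        rw [← Finset.mul_sum, ← measureReal_iUnion_fintype hE.pairwise_disjoint hE.measurableSet,
          measureReal_congr hcov]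

end Partition

/-! ### The support function and the first variation of the volume -/

section SupportFunction

variable {E : Type*} [NormedAddCommGroup E] [InnerProductSpace ℝ E] {N : Set E} {w : E} {R ρ : ℝ}

/-- The support function of `N`. -/
def supportFun (N : Set E) (u : E) : ℝ :=
  sSup ((fun w => ⟪w, u⟫) '' N)

theorem inner_le_supportFun (hN : IsCompact N) (hw : w ∈ N) (u : E) : ⟪w, u⟫ ≤ supportFun N u :=
  le_csSup (hN.image (by fun_prop)).bddAbove (mem_image_of_mem _ hw)

theorem exists_inner_eq_supportFun (hN : IsCompact N) (hne : N.Nonempty) (u : E) :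
    ∃ w ∈ N, ⟪w, u⟫ = supportFun N u :=
  (hN.image (by fun_prop)).sSup_mem (hne.image _)

theorem le_supportFun_of_closedBall_subset (hN : IsCompact N) (hρ : 0 ≤ ρ)
    (hρN : Metric.closedBall 0 ρ ⊆ N) {u : E} (hu : ‖u‖ = 1) : ρ ≤ supportFun N u := by
  have hmem : ρ • u ∈ N := hρN (by simp [norm_smul, hu, abs_of_nonneg hρ])
  simpa [real_inner_smul_left, real_inner_self_eq_norm_sq, hu] using inner_le_supportFun hN hmem u

theorem supportFun_le_add_mul_norm_sub (hN : IsCompact N) (hne : N.Nonempty)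
    (hR : N ⊆ Metric.closedBall 0 R) (u v : E) :
    supportFun N u ≤ supportFun N v + R * ‖u - v‖ := by
  obtain ⟨w, hw, hwu⟩ := exists_inner_eq_supportFun hN hne u
  calc supportFun N u = ⟪w, v⟫ + ⟪w, u - v⟫ := by rw [← hwu, inner_sub_right]; ring
    _ ≤ supportFun N v + ‖w‖ * ‖u - v‖ :=
      add_le_add (inner_le_supportFun hN hw v) (real_inner_le_norm _ _)
    _ ≤ supportFun N v + R * ‖u - v‖ := by
      gcongr
      exact mem_closedBall_zero_iff.1 (hR hw)

theorem lipschitzWith_supportFun (hN : IsCompact N) (hne : N.Nonempty)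
    (hR : N ⊆ Metric.closedBall 0 R) : LipschitzWith R.toNNReal (supportFun N) :=
  .of_le_add_mul' R fun u v => by
    rw [dist_eq_norm]
    exact supportFun_le_add_mul_norm_sub hN hne hR u v

end SupportFunction

section FirstVariation

variable {k : ℕ} {K N : Set (Euc (k + 1))}

theorem IsConvexBody.integrable_supportFun (hK : IsConvexBody K) (hN : IsCompact N)
    (hne : N.Nonempty) : Integrable (supportFun N) (surfMeasure K) := by
  have := hK.isFiniteMeasure_surfMeasure
  obtain ⟨R, hR⟩ := hN.isBounded.subset_closedBall 0
  refine .of_bound (C := R)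
    (lipschitzWith_supportFun hN hne hR).continuous.aestronglyMeasurable ?_
  filter_upwards [hK.ae_norm_eq_one] with u hu
  obtain ⟨w, hw, hwu⟩ := exists_inner_eq_supportFun hN hne u
  calc ‖supportFun N u‖ ≤ ‖w‖ * ‖u‖ := hwu ▸ norm_inner_le_norm w u
    _ ≤ R := by
      rw [hu, mul_one]
      exact mem_closedBall_zero_iff.1 (hR hw)

/-- The integral of the support function of `N` against the surface area measure of `K`, rescaled
to the Lebesgue normalization. It is the right derivative at `0` of the volume of `K + t • N`, that
is `k + 1` times the mixed volume `V(K, …, K, N)`. -/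
def firstVariation (K N : Set (Euc (k + 1))) : ℝ :=
  hausdorffFactor k * ∫ u, supportFun N u ∂surfMeasure K

theorem firstVariation_eq_add {L M : Set (Euc (k + 1))} (hK : IsConvexBody K)
    (hL : IsConvexBody L) (hS : surfMeasure M = surfMeasure K + surfMeasure L) (hN : IsCompact N)
    (hne : N.Nonempty) : firstVariation M N = firstVariation K N + firstVariation L N := by
  rw [firstVariation, hS, integral_add_measure (hK.integrable_supportFun hN hne)
    (hL.integrable_supportFun hN hne), mul_add, firstVariation, firstVariation]

end FirstVariation

/-! ### The lower bound for the first variation -/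

/-- The set swept out by `X` when translated by `s • w`, `0 ≤ s ≤ t`. -/
def sweep {m : ℕ} (X : Set (Euc m)) (w : Euc m) (t : ℝ) : Set (Euc m) :=
  (fun q : Euc m × ℝ => q.1 + q.2 • w) '' (X ×ˢ Icc 0 t)

section Sweep

variable {m : ℕ} {K N X Y : Set (Euc m)} {u w w' : Euc m} {t δ : ℝ}

theorem isCompact_sweep (hX : IsCompact X) (w : Euc m) (t : ℝ) : IsCompact (sweep X w t) :=
  (hX.prod isCompact_Icc).image (by fun_prop)

theorem sweep_subset_cthickening : sweep X w t ⊆ Metric.cthickening (t * ‖w‖) X := by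
  rintro _ ⟨⟨x, s⟩, ⟨hx, hs0, hst⟩, rfl⟩
  refine Metric.mem_cthickening_of_dist_le _ x _ _ hx ?_
  simp only [dist_eq_norm, add_sub_cancel_left, norm_smul, Real.norm_of_nonneg hs0]
  gcongr

theorem sweep_subset_add_smul (hN : Convex ℝ N) (h0 : 0 ∈ N) (hX : X ⊆ K) (hw : w ∈ N)
    (ht : 0 < t) : sweep X w t ⊆ K + t • N := by
  rintro _ ⟨⟨x, s⟩, ⟨hx, hs0, hst⟩, rfl⟩
  refine add_mem_add (hX hx) ⟨(s / t) • w, ?_, ?_⟩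
  · exact hN.smul_mem_of_zero_mem h0 hw ⟨by positivity, (div_le_one ht).2 hst⟩
  · simp only [smul_smul, mul_div_cancel₀ _ ht.ne']

theorem disjoint_interior_sweep (hX : X ⊆ normalPts K (Metric.closedBall u δ))
    (hw : δ * ‖w‖ ≤ ⟪w, u⟫) : Disjoint (interior K) (sweep X w t) := by
  rw [Set.disjoint_right]
  rintro _ ⟨⟨x, s⟩, ⟨hx, hs0, -⟩, rfl⟩ hmem
  obtain ⟨n, hn, hxn⟩ := hX hx
  have hneg : s * ⟪w, n⟫ < 0 := by
    simpa [real_inner_smul_left] using hxn.inner_sub_neg hmem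
  have hwn : 0 ≤ ⟪w, n⟫ := by
    linarith [real_inner_le_inner_add_mul_norm (mem_closedBall_iff_norm.1 hn) w]
  exact hneg.not_ge (mul_nonneg hs0 hwn)

theorem eventually_disjoint_sweep (hX : IsCompact X) (hY : IsCompact Y) (hXY : Disjoint X Y)
    (w w' : Euc m) : ∀ᶠ t in 𝓝[>] (0 : ℝ), Disjoint (sweep X w t) (sweep Y w' t) := by
  obtain ⟨r, hr, hdisj⟩ := hXY.exists_cthickenings hX hY.isClosed
  have hsmall (v : Euc m) : ∀ᶠ t in 𝓝[>] (0 : ℝ), t * ‖v‖ < r :=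
    nhdsWithin_le_nhds <|
      (by fun_prop : ContinuousAt (fun t : ℝ => t * ‖v‖) 0).eventually_lt_const (by simpa using hr)
  filter_upwards [hsmall w, hsmall w'] with t hw hw'
  exact hdisj.mono (sweep_subset_cthickening.trans (Metric.cthickening_mono hw.le _))
    (sweep_subset_cthickening.trans (Metric.cthickening_mono hw'.le _))

theorem IsConvexBody.volume_real_interior (hK : IsConvexBody K) :
    volume.real (interior K) = volume.real K := by
  rw [Measure.real, Measure.real, ← self_sdiff_frontier,
    measure_sdiff_null (hK.1.addHaar_frontier volume)]

theorem IsConvexBody.eventually_add_sum_sweep_le {ι : Type*} [Fintype ι] {u w : ι → Euc m}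
    {X : ι → Set (Euc m)} (hK : IsConvexBody K) (hN : IsCompact N) (hNc : Convex ℝ N)
    (h0 : 0 ∈ N) (hXc : ∀ i, IsCompact (X i)) (hXd : Pairwise (Function.onFun Disjoint X))
    (hX : ∀ i, X i ⊆ normalPts K (Metric.closedBall (u i) δ)) (hw : ∀ i, w i ∈ N)
    (hwu : ∀ i, δ * ‖w i‖ ≤ ⟪w i, u i⟫) :
    ∀ᶠ t in 𝓝[>] (0 : ℝ),
      volume.real K + ∑ i, volume.real (sweep (X i) (w i) t) ≤ volume.real (K + t • N) := by
  have hdisj : ∀ᶠ t in 𝓝[>] (0 : ℝ), ∀ i j, i ≠ j →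
      Disjoint (sweep (X i) (w i) t) (sweep (X j) (w j) t) :=
    Filter.eventually_all.2 fun i => Filter.eventually_all.2 fun j => by
      by_cases hij : i = j
      · exact .of_forall fun t h => absurd hij h
      · exact (eventually_disjoint_sweep (hXc i) (hXc j) (hXd hij) _ _).mono fun t h _ => h
  filter_upwards [hdisj, self_mem_nhdsWithin] with t htd ht
  have hsc (i) : IsCompact (sweep (X i) (w i) t) := isCompact_sweep (hXc i) _ _
  have hsub : interior K ∪ ⋃ i, sweep (X i) (w i) t ⊆ K + t • N :=
    union_subset
      (fun x hx => ⟨x, interior_subset hx, 0, ⟨0, h0, smul_zero t⟩, add_zero x⟩)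
      (iUnion_subset fun i => sweep_subset_add_smul hNc h0
        ((hX i).trans (normalPts_subset_frontier.trans hK.frontier_subset)) (hw i) ht)
  calc volume.real K + ∑ i, volume.real (sweep (X i) (w i) t)
      = volume.real (interior K ∪ ⋃ i, sweep (X i) (w i) t) := by
        rw [measureReal_union (Set.disjoint_iUnion_right.2 fun i =>
            disjoint_interior_sweep (hX i) (hwu i))
          (MeasurableSet.iUnion fun i => (hsc i).measurableSet)
          (measure_ne_top_of_subset interior_subset hK.2.1.measure_ne_top)
          (isCompact_iUnion hsc).measure_ne_top,
          measureReal_iUnion_fintype (fun i j hij => htd i j hij) (fun i => (hsc i).measurableSet)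
            (fun i => (hsc i).measure_ne_top), hK.volume_real_interior]
    _ ≤ volume.real (K + t • N) := measureReal_mono hsub (hK.2.1.add (hN.smul t)).measure_ne_top

end Sweep

section LowerBound

variable {k : ℕ} {K N X : Set (Euc (k + 1))} {u w : Euc (k + 1)} {t δ η ρ A : ℝ}

theorem ofReal_mul_volume_le_volume_sweep {Ψ : Euc (k + 1) ≃L[ℝ] ℝ × Euc k}
    (hΨ : MeasurePreserving Ψ) (hw1 : 0 < (Ψ w).1) (hw2 : (Ψ w).2 = 0) (hX : IsCompact X) (t : ℝ) :
    ENNReal.ofReal (t * (Ψ w).1) * volume ((fun v => (Ψ v).2) '' X) ≤ volume (sweep X w t) := by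
  have hPX : IsCompact ((fun v => (Ψ v).2) '' X) := hX.image (by fun_prop)
  rw [volume_eq_lintegral_fiber hΨ (isCompact_sweep hX w t), ← setLIntegral_const,
    ← lintegral_indicator hPX.measurableSet]
  refine lintegral_mono (indicator_le ?_)
  rintro _ ⟨x, hx, rfl⟩
  have hfiber : Icc (Ψ x).1 ((Ψ x).1 + t * (Ψ w).1) ⊆
      {s : ℝ | Ψ.symm (s, (Ψ x).2) ∈ sweep X w t} := by
    rintro s ⟨hs, hst⟩
    refine ⟨(x, (s - (Ψ x).1) / (Ψ w).1),
      ⟨hx, div_nonneg (by linarith) hw1.le, (div_le_iff₀ hw1).2 (by linarith)⟩, ?_⟩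
    refine Ψ.eq_symm_apply.2 (Prod.ext ?_ ?_)
    · simp [hw1.ne']
    · simp [hw2]
  calc ENNReal.ofReal (t * (Ψ w).1)
      = volume (Icc (Ψ x).1 ((Ψ x).1 + t * (Ψ w).1)) := by
        rw [Real.volume_Icc, add_sub_cancel_left]
    _ ≤ _ := measure_mono hfiber

theorem mul_hausdorffMeasure_le_volume_image {c : ℝ} (hc : 0 < c) (hX : IsCompact X)
    (P : Euc (k + 1) →L[ℝ] Euc k) (hP : ∀ x ∈ X, ∀ y ∈ X, c * ‖x - y‖ ≤ ‖P (x - y)‖) :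
    hausdorffFactor k * (c ^ k * (μH[k] : Measure (Euc (k + 1))).real X) ≤
      volume.real (P '' X) := by
  have hle : μH[k] X ≤ (c⁻¹.toNNReal : ℝ≥0∞) ^ (k : ℝ) * μH[k] (P '' X) :=
    hausdorffMeasure_le_mul_image_of_edist_le k.cast_nonneg fun x hx y hy =>
      edist_le_toNNReal_mul_edist_map (by positivity) <| by
        rw [inv_mul_eq_div, le_div_iff₀' hc]
        exact hP x hx y hy
  have hfin : μH[k] (P '' X) ≠ ∞ := (hX.image P.continuous).measure_ne_top
  have hreal := ENNReal.toReal_mono (by finiteness) hle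
  rw [ENNReal.toReal_mul, ENNReal.rpow_natCast, ENNReal.toReal_pow, ENNReal.coe_toReal,
    Real.coe_toNNReal _ (by positivity), inv_pow, inv_mul_eq_div, le_div_iff₀' (by positivity)]
    at hreal
  rw [Measure.real, Measure.real, volume_eq_hausdorffFactor_mul, ENNReal.toReal_mul,
    ENNReal.coe_toReal]
  gcongr

theorem IsConvexBody.le_volume_real_sweep (hK : IsConvexBody K) (hX : IsCompact X)
    (hu : ‖u‖ = 1) (hw : 0 < ⟪w, u⟫) (hη : (1 + ‖w‖ / ⟪w, u⟫) * δ ≤ η) (hη1 : η < 1)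
    (hXn : X ⊆ normalPts K (Metric.closedBall u δ)) (ht : 0 ≤ t) :
    t * (hausdorffFactor k * ((1 - η) ^ k * (⟪w, u⟫ * (μH[k] : Measure (Euc (k + 1))).real X))) ≤
      volume.real (sweep X w t) := by
  obtain ⟨Ψ, hΨ, hΨ1, hΨ2, hΨn⟩ := exists_oblique_splitting hu hw
  let P : Euc (k + 1) →L[ℝ] Euc k := .comp (.snd ℝ ℝ _) (Ψ : Euc (k + 1) →L[ℝ] ℝ × Euc k)
  have hP : ∀ x ∈ X, ∀ y ∈ X, (1 - η) * ‖x - y‖ ≤ ‖P (x - y)‖ := fun x hx y hy => by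
    have hinner := hK.abs_inner_sub_le_of_mem_normalPts subset_rfl (hXn hx) (hXn hy)
    have hmul : (1 + ‖w‖ / ⟪w, u⟫) * |⟪x - y, u⟫| ≤ η * ‖x - y‖ :=
      calc _ ≤ (1 + ‖w‖ / ⟪w, u⟫) * (δ * ‖x - y‖) := by gcongr
        _ = (1 + ‖w‖ / ⟪w, u⟫) * δ * ‖x - y‖ := by ring
        _ ≤ _ := by gcongr
    have hle : ‖x - y‖ ≤ ‖P (x - y)‖ + (1 + ‖w‖ / ⟪w, u⟫) * |⟪x - y, u⟫| := hΨn (x - y)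
    linarith
  have hsweep := ENNReal.toReal_mono (isCompact_sweep hX w t).measure_ne_top
    (ofReal_mul_volume_le_volume_sweep hΨ (by rwa [hΨ1]) hΨ2 hX t)
  rw [ENNReal.toReal_mul, ENNReal.toReal_ofReal (by rw [hΨ1]; positivity), hΨ1] at hsweep
  calc _ = t * ⟪w, u⟫ * (hausdorffFactor k *
        ((1 - η) ^ k * (μH[k] : Measure (Euc (k + 1))).real X)) := by ring
    _ ≤ t * ⟪w, u⟫ * volume.real (P '' X) := by
        gcongr
        exact mul_hausdorffMeasure_le_volume_image (sub_pos.2 hη1) hX P hP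
    _ ≤ _ := hsweep

theorem IsConvexBody.eventually_add_mul_le_of_lt_sum {ι : Type*} [Fintype ι]
    {u w : ι → Euc (k + 1)} {E : ι → Set (Euc (k + 1))} (hK : IsConvexBody K) (hN : IsCompact N)
    (hNc : Convex ℝ N) (h0 : 0 ∈ N) (hδ : 0 ≤ δ)
    (hE : IsFinePartition (surfMeasure K) (Metric.sphere 0 1) δ u E) (hw : ∀ i, w i ∈ N)
    (hwu : ∀ i, 0 < ⟪w i, u i⟫) (hη : ∀ i, (1 + ‖w i‖ / ⟪w i, u i⟫) * δ ≤ η) (hη1 : η < 1)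
    (hA : A < hausdorffFactor k *
      ((1 - η) ^ k * ∑ i, ⟪w i, u i⟫ * (surfMeasure K).real (E i))) :
    ∀ᶠ t in 𝓝[>] (0 : ℝ), volume.real K + t * A ≤ volume.real (K + t • N) := by
  obtain ⟨ε, hε, hεA⟩ : ∃ ε > 0, A < hausdorffFactor k * ((1 - η) ^ k *
      ∑ i, ⟪w i, u i⟫ * ((surfMeasure K).real (E i) - ε)) := by
    have hc : ContinuousAt (fun ε : ℝ => hausdorffFactor k * ((1 - η) ^ k *
      ∑ i, ⟪w i, u i⟫ * ((surfMeasure K).real (E i) - ε))) 0 := by fun_prop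
    exact (hc.eventually_const_lt (by simpa using hA)).exists_gt
  choose X hXE hXc hXε using
    fun i => hK.exists_isCompact_subset_preimage_gaussMap (hE.measurableSet i) hε
  have hXn (i) : X i ⊆ normalPts K (Metric.closedBall (u i) δ) := fun x hx =>
    ⟨_, hE.subset_closedBall i (hXE i hx).1, hK.isOutwardNormalAt_gaussMap (hXE i hx).2⟩
  have hXd : Pairwise (Function.onFun Disjoint X) := fun i j hij =>
    ((hE.pairwise_disjoint hij).preimage (gaussMap K)).mono
      (fun x hx => (hXE i hx).1) (fun x hx => (hXE j hx).1)
  have hδw (i) : δ * ‖w i‖ ≤ ⟪w i, u i⟫ := by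
    have hlt : ‖w i‖ / ⟪w i, u i⟫ * δ ≤ 1 := by linarith [hη i]
    rwa [div_mul_eq_mul_div, div_le_one (hwu i), mul_comm] at hlt
  filter_upwards [hK.eventually_add_sum_sweep_le hN hNc h0 hXc hXd hXn hw hδw,
    self_mem_nhdsWithin] with t hsum ht
  have ht0 : 0 ≤ t := le_of_lt ht
  refine le_trans ?_ hsum
  gcongr
  calc t * A ≤ t * (hausdorffFactor k * ((1 - η) ^ k *
        ∑ i, ⟪w i, u i⟫ * ((surfMeasure K).real (E i) - ε))) := by gcongr
    _ = ∑ i, t * (hausdorffFactor k * ((1 - η) ^ k *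
        (⟪w i, u i⟫ * ((surfMeasure K).real (E i) - ε)))) := by
        simp only [Finset.mul_sum]
    _ ≤ ∑ i, volume.real (sweep (X i) (w i) t) := Finset.sum_le_sum fun i _ => by
        refine le_trans ?_ (hK.le_volume_real_sweep (hXc i)
          (mem_sphere_zero_iff_norm.1 (hE.mem i)) (hwu i) (hη i) hη1 (hXn i) ht0)
        have : 0 ≤ 1 - η := by linarith
        have : 0 ≤ ⟪w i, u i⟫ := (hwu i).le
        gcongr
        exact hXε i

theorem IsConvexBody.eventually_add_mul_le_volume_real_add_smul (hK : IsConvexBody K)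
    (hN : IsCompact N) (hNc : Convex ℝ N) (hρ : 0 < ρ) (hρN : Metric.closedBall 0 ρ ⊆ N)
    (hA : A < firstVariation K N) :
    ∀ᶠ t in 𝓝[>] (0 : ℝ), volume.real K + t * A ≤ volume.real (K + t • N) := by
  have := hK.isFiniteMeasure_surfMeasure
  have h0 : 0 ∈ N := hρN (Metric.mem_closedBall_self hρ.le)
  obtain ⟨R, hR⟩ := hN.isBounded.subset_closedBall 0
  have hR0 : 0 ≤ R := dist_nonneg.trans (hR h0)
  obtain ⟨δ, hδ, hδA, hδ1⟩ : ∃ δ > 0, A < hausdorffFactor k * ((1 - (1 + R / ρ) * δ) ^ k *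
      (∫ n, supportFun N n ∂surfMeasure K - R * δ * (surfMeasure K).real univ)) ∧
      (1 + R / ρ) * δ < 1 := by
    have hc : ContinuousAt (fun δ : ℝ => hausdorffFactor k * ((1 - (1 + R / ρ) * δ) ^ k *
      (∫ n, supportFun N n ∂surfMeasure K - R * δ * (surfMeasure K).real univ))) 0 := by fun_prop
    have hc' : ContinuousAt (fun δ : ℝ => (1 + R / ρ) * δ) 0 := by fun_prop
    exact ((hc.eventually_const_lt (by simpa [firstVariation] using hA)).and
      (hc'.eventually_lt_const (by simp))).exists_gt
  obtain ⟨n, u, E, hE⟩ := exists_isFinePartition (surfMeasure K) (isCompact_sphere 0 1) hδ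
  have hRiemann := abs_le.1 <| hE.abs_integral_sub_sum_le
    (hK.ae_norm_eq_one.mono fun n => mem_sphere_zero_iff_norm.2)
    (lipschitzWith_supportFun hN ⟨0, h0⟩ hR) (hK.integrable_supportFun hN ⟨0, h0⟩)
  rw [Real.coe_toNNReal R hR0] at hRiemann
  choose w hw hwu using fun i => exists_inner_eq_supportFun hN ⟨0, h0⟩ (u i)
  have hρw (i) : ρ ≤ ⟪w i, u i⟫ := hwu i ▸
    le_supportFun_of_closedBall_subset hN hρ.le hρN (mem_sphere_zero_iff_norm.1 (hE.mem i))
  refine hK.eventually_add_mul_le_of_lt_sum hN hNc h0 hδ.le hE hw (fun i => hρ.trans_le (hρw i))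
    (fun i => ?_) hδ1 (hδA.trans_le ?_)
  · gcongr
    · exact mem_closedBall_zero_iff.1 (hR (hw i))
    · exact hρw i
  · have : 0 ≤ 1 - (1 + R / ρ) * δ := by linarith
    simp only [hwu]
    gcongr
    linarith

end LowerBound

/-! ### The upper bound for the first variation -/

/-- The inner parallel body of `M` relative to `N`: the points of `M` whose translates by `t • N`
stay inside `M`. -/
def innerParallel {m : ℕ} (M N : Set (Euc m)) (t : ℝ) : Set (Euc m) :=
  {x ∈ M | ∀ w ∈ N, x + t • w ∈ M}

/-- The points of `M` of the form `y - s • w` with `y ∈ Y`, `w ∈ N`, `0 ≤ s ≤ t`. With `Y` ranging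
over pieces of the boundary, these sets cover the complement of the inner parallel body. -/
def innerShell {m : ℕ} (M Y N : Set (Euc m)) (t : ℝ) : Set (Euc m) :=
  M ∩ (fun q : Euc m × Euc m × ℝ => q.1 - q.2.2 • q.2.1) '' (Y ×ˢ N ×ˢ Icc 0 t)

section InnerShell

variable {m : ℕ} {M N Y D : Set (Euc m)} {x u : Euc m} {t δ R : ℝ}

theorem isCompact_innerParallel (hM : IsCompact M) (N : Set (Euc m)) (t : ℝ) :
    IsCompact (innerParallel M N t) := by
  have hinter : innerParallel M N t = M ∩ ⋂ w ∈ N, (fun x => x + t • w) ⁻¹' M := by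
    ext x
    simp [innerParallel]
  rw [hinter]
  exact hM.inter_right (isClosed_biInter fun w _ => hM.isClosed.preimage (by fun_prop))

theorem innerParallel_add_subset (M N : Set (Euc m)) (t : ℝ) : innerParallel M N t + t • N ⊆ M := by
  rintro _ ⟨x, hx, _, ⟨w, hw, rfl⟩, rfl⟩
  exact hx.2 w hw

theorem isCompact_innerShell (hM : IsCompact M) (hY : IsCompact Y) (hN : IsCompact N) (t : ℝ) :
    IsCompact (innerShell M Y N t) :=
  hM.inter ((hY.prod (hN.prod isCompact_Icc)).image (by fun_prop))

theorem inter_frontier_nonempty_of_isPreconnected {X : Type*} [TopologicalSpace X] {S T : Set X}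
    (hS : IsPreconnected S) (hST : (S ∩ T).Nonempty) (hSTc : (S ∩ Tᶜ).Nonempty) :
    (S ∩ frontier T).Nonempty := by
  by_contra! hdisj
  have hcover : S ⊆ interior T ∪ interior Tᶜ := by
    rw [← compl_frontier_eq_union_interior, subset_compl_iff_disjoint_right]
    exact disjoint_iff_inter_eq_empty.2 hdisj
  obtain ⟨x, hx⟩ := hST
  obtain ⟨y, hy⟩ := hSTc
  obtain ⟨z, -, hz, hzc⟩ := hS _ _ isOpen_interior isOpen_interior hcover
    ⟨x, hx.1, (hcover hx.1).resolve_right fun h => interior_subset h hx.2⟩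
    ⟨y, hy.1, (hcover hy.1).resolve_left fun h => hy.2 (interior_subset h)⟩
  exact interior_subset hzc (interior_subset hz)

theorem IsConvexBody.diff_innerParallel_subset {ι : Type*} {D : ι → Set (Euc m)}
    (hM : IsConvexBody M) (hD : Metric.sphere 0 1 ⊆ ⋃ i, D i) (ht : 0 ≤ t) :
    M \ innerParallel M N t ⊆ ⋃ i, innerShell M (normalPts M (D i)) N t := by
  rintro x ⟨hx, hxt⟩
  obtain ⟨w, hw, hxw⟩ : ∃ w ∈ N, x + t • w ∉ M := by
    by_contra! h
    exact hxt ⟨hx, h⟩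
  obtain ⟨_, ⟨s, hs, rfl⟩, hsx⟩ := inter_frontier_nonempty_of_isPreconnected (T := M)
    ((isPreconnected_Icc (a := 0) (b := t)).image (fun s : ℝ => x + s • w) (by fun_prop))
    ⟨_, mem_image_of_mem _ (left_mem_Icc.2 ht), by simpa using hx⟩
    ⟨_, mem_image_of_mem _ (right_mem_Icc.2 ht), hxw⟩
  obtain ⟨n, hn⟩ := hM.exists_isOutwardNormalAt hsx
  obtain ⟨i, hi⟩ := mem_iUnion.1 (hD (mem_sphere_zero_iff_norm.2 hn.2.1))
  exact mem_iUnion.2 ⟨i, hx, (x + s • w, w, s), ⟨⟨n, hi, hn⟩, hw, hs⟩, add_sub_cancel_right _ _⟩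

theorem le_of_mem_innerShell_of_add_smul_mem (hN : IsCompact N) (h0 : 0 ∈ N)
    (hR : N ⊆ Metric.closedBall 0 R) (hu : ‖u‖ = 1) (hδ1 : δ < 1) (hD : D ⊆ Metric.closedBall u δ)
    (hx : x ∈ innerShell M (normalPts M D) N t) {l : ℝ} (hl : x + l • u ∈ M) :
    l ≤ t * ((supportFun N u + δ * R) / (1 - δ)) := by
  obtain ⟨-, ⟨y, w, s⟩, ⟨⟨n, hnD, hn⟩, hw, hs0, hst⟩, rfl⟩ := hx
  have hnu : ‖n - u‖ ≤ δ := mem_closedBall_iff_norm.1 (hD hnD)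
  have hδ0 : 0 ≤ δ := (norm_nonneg _).trans hnu
  have hR0 : 0 ≤ R := dist_nonneg.trans (hR h0)
  have hsupp : 0 ≤ supportFun N u := by simpa using inner_le_supportFun hN h0 u
  have hnormal : l * ⟪u, n⟫ ≤ s * ⟪w, n⟫ := by
    have h : ⟪y - s • w + l • u - y, n⟫ ≤ 0 := hn.2.2 _ hl
    rw [show y - s • w + l • u - y = l • u - s • w by abel, inner_sub_left, real_inner_smul_left,
      real_inner_smul_left] at h
    exact sub_nonpos.1 h
  have hun : 1 - δ ≤ ⟪u, n⟫ := by
    have h := real_inner_le_inner_add_mul_norm hnu u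
    rw [real_inner_self_eq_norm_sq, hu, one_pow, mul_one] at h
    exact sub_le_iff_le_add.2 h
  have hwn : ⟪w, n⟫ ≤ supportFun N u + δ * R :=
    calc ⟪w, n⟫ ≤ supportFun N n := inner_le_supportFun hN hw n
      _ ≤ supportFun N u + R * ‖n - u‖ := supportFun_le_add_mul_norm_sub hN ⟨0, h0⟩ hR n u
      _ ≤ supportFun N u + δ * R := by
          rw [mul_comm δ]
          gcongr
  rcases le_total l 0 with hl0 | hl0
  · have : 0 ≤ 1 - δ := by linarith
    exact hl0.trans (mul_nonneg (hs0.trans hst) (by positivity))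
  · rw [← mul_div_assoc, le_div_iff₀ (by linarith)]
    calc l * (1 - δ) ≤ l * ⟪u, n⟫ := by gcongr
      _ ≤ s * ⟪w, n⟫ := hnormal
      _ ≤ s * (supportFun N u + δ * R) := by gcongr
      _ ≤ t * (supportFun N u + δ * R) := by gcongr

end InnerShell

section UpperBound

variable {k : ℕ} {M N Y D : Set (Euc (k + 1))} {x u : Euc (k + 1)} {t δ R B : ℝ}
  {Ψ : Euc (k + 1) ≃L[ℝ] ℝ × Euc k}

theorem IsOrthogonalSplitting.snd_mem_cthickening (hΨ : IsOrthogonalSplitting u Ψ)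
    (hR : N ⊆ Metric.closedBall 0 R) (hx : x ∈ innerShell M Y N t) :
    (Ψ x).2 ∈ Metric.cthickening (t * R) ((fun v => (Ψ v).2) '' Y) := by
  obtain ⟨-, ⟨y, w, s⟩, ⟨hy, hw, hs0, hst⟩, rfl⟩ := hx
  refine Metric.mem_cthickening_of_dist_le _ (Ψ y).2 _ _ (mem_image_of_mem _ hy) ?_
  calc dist (Ψ (y - s • w)).2 (Ψ y).2 = s * ‖(Ψ w).2‖ := by
        simp [norm_smul, abs_of_nonneg hs0]
    _ ≤ t * R := mul_le_mul hst ((hΨ.norm_snd_le w).trans (mem_closedBall_zero_iff.1 (hR hw)))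
        (norm_nonneg _) (hs0.trans hst)

theorem IsOrthogonalSplitting.volume_fiber_innerShell_le (hΨ : IsOrthogonalSplitting u Ψ)
    (hN : IsCompact N) (h0 : 0 ∈ N) (hR : N ⊆ Metric.closedBall 0 R) (hu : ‖u‖ = 1) (hδ1 : δ < 1)
    (hD : D ⊆ Metric.closedBall u δ) (q : Euc k) :
    volume {s : ℝ | Ψ.symm (s, q) ∈ innerShell M (normalPts M D) N t} ≤
      ENNReal.ofReal (t * ((supportFun N u + δ * R) / (1 - δ))) := by
  have hle (a b : ℝ) (ha : Ψ.symm (a, q) ∈ innerShell M (normalPts M D) N t)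
      (hb : Ψ.symm (b, q) ∈ innerShell M (normalPts M D) N t) :
      b - a ≤ t * ((supportFun N u + δ * R) / (1 - δ)) := by
    refine le_of_mem_innerShell_of_add_smul_mem hN h0 hR hu hδ1 hD ha ?_
    rw [hΨ.symm_add_smul hu, add_sub_cancel]
    exact hb.1
  refine (Real.volume_le_diam _).trans (Metric.ediam_le fun a ha b hb => ?_)
  rw [edist_dist, Real.dist_eq]
  exact ENNReal.ofReal_le_ofReal (abs_sub_le_iff.2 ⟨hle b a hb ha, hle a b ha hb⟩)

theorem IsConvexBody.volume_innerShell_le (hM : IsConvexBody M) (hΨ : IsOrthogonalSplitting u Ψ)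
    (hN : IsCompact N) (h0 : 0 ∈ N) (hR : N ⊆ Metric.closedBall 0 R) (hDc : IsClosed D)
    (hu : ‖u‖ = 1) (hδ1 : δ < 1) (hD : D ⊆ Metric.closedBall u δ) :
    volume (innerShell M (normalPts M D) N t) ≤
      ENNReal.ofReal (t * ((supportFun N u + δ * R) / (1 - δ))) *
        volume (Metric.cthickening (t * R) ((fun v => (Ψ v).2) '' normalPts M D)) := by
  rw [volume_eq_lintegral_fiber hΨ.measurePreserving
    (isCompact_innerShell hM.2.1 (hM.isCompact_normalPts hDc) hN t), ← setLIntegral_const,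
    ← lintegral_indicator Metric.isClosed_cthickening.measurableSet]
  refine lintegral_mono fun q => ?_
  by_cases hq : q ∈ Metric.cthickening (t * R) ((fun v => (Ψ v).2) '' normalPts M D)
  · rw [indicator_of_mem hq]
    exact hΨ.volume_fiber_innerShell_le hN h0 hR hu hδ1 hD q
  · have hempty : {s : ℝ | Ψ.symm (s, q) ∈ innerShell M (normalPts M D) N t} = ∅ :=
      eq_empty_of_forall_notMem fun s hs => hq (by simpa using hΨ.snd_mem_cthickening hR hs)
    simp only [hempty, measure_empty, zero_le]

theorem IsConvexBody.volume_real_image_normalPts_le (hM : IsConvexBody M)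
    (hΨ : IsOrthogonalSplitting u Ψ) (hD : IsClosed D) :
    volume.real ((fun v => (Ψ v).2) '' normalPts M D) ≤
      hausdorffFactor k * (surfMeasure M).real D := by
  have := hM.isFiniteMeasure_surfMeasure
  have hlip : LipschitzWith 1 fun v => (Ψ v).2 := .of_dist_le_mul fun x y => by
    simpa [dist_eq_norm] using hΨ.norm_snd_le (x - y)
  have hle : volume ((fun v => (Ψ v).2) '' normalPts M D) ≤
      hausdorffFactor k * surfMeasure M D := by
    rw [volume_eq_hausdorffFactor_mul, hM.surfMeasure_eq_hausdorffMeasure_normalPts hD]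
    gcongr
    simpa using hlip.hausdorffMeasure_image_le k.cast_nonneg (normalPts M D)
  have hreal := ENNReal.toReal_mono (by finiteness) hle
  rwa [ENNReal.toReal_mul, ENNReal.coe_toReal] at hreal

theorem IsConvexBody.eventually_volume_real_innerShell_le (hM : IsConvexBody M)
    (hN : IsCompact N) (h0 : 0 ∈ N) (hR : N ⊆ Metric.closedBall 0 R) (hDc : IsClosed D)
    (hu : ‖u‖ = 1) (hδ0 : 0 ≤ δ) (hδ1 : δ < 1) (hD : D ⊆ Metric.closedBall u δ)
    (hB : (supportFun N u + δ * R) / (1 - δ) * (hausdorffFactor k * (surfMeasure M).real D) < B) :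
    ∀ᶠ t in 𝓝[>] (0 : ℝ), volume.real (innerShell M (normalPts M D) N t) ≤ t * B := by
  obtain ⟨Ψ, hΨ⟩ := exists_isOrthogonalSplitting hu
  have hPc : IsCompact ((fun v => (Ψ v).2) '' normalPts M D) :=
    (hM.isCompact_normalPts hDc).image (by fun_prop)
  have hc0 : 0 ≤ (supportFun N u + δ * R) / (1 - δ) := by
    have hR0 : 0 ≤ R := dist_nonneg.trans (hR h0)
    have hsupp : 0 ≤ supportFun N u := by simpa using inner_le_supportFun hN h0 u
    exact div_nonneg (by positivity) (by linarith)
  have hlim : Filter.Tendsto (fun t : ℝ => (supportFun N u + δ * R) / (1 - δ) *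
      volume.real (Metric.cthickening (t * R) ((fun v => (Ψ v).2) '' normalPts M D))) (𝓝[>] 0)
      (𝓝 ((supportFun N u + δ * R) / (1 - δ) *
        volume.real ((fun v => (Ψ v).2) '' normalPts M D))) := by
    refine .const_mul _ ((ENNReal.tendsto_toReal hPc.measure_ne_top).comp
      ((tendsto_measure_cthickening_of_isCompact hPc).comp (tendsto_nhdsWithin_of_tendsto_nhds ?_)))
    simpa using (by fun_prop : Continuous fun t : ℝ => t * R).tendsto 0
  have hlt : (supportFun N u + δ * R) / (1 - δ) *
      volume.real ((fun v => (Ψ v).2) '' normalPts M D) < B :=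
    (mul_le_mul_of_nonneg_left (hM.volume_real_image_normalPts_le hΨ hDc) hc0).trans_lt hB
  filter_upwards [hlim.eventually_lt_const hlt, self_mem_nhdsWithin] with t htB ht
  have ht0 : 0 ≤ t := le_of_lt ht
  have hfin : volume (Metric.cthickening (t * R) ((fun v => (Ψ v).2) '' normalPts M D)) ≠ ∞ :=
    hPc.cthickening.measure_ne_top
  have hvol := ENNReal.toReal_mono (by finiteness)
    (hM.volume_innerShell_le (t := t) hΨ hN h0 hR hDc hu hδ1 hD)
  rw [ENNReal.toReal_mul, ENNReal.toReal_ofReal (by positivity), mul_assoc] at hvol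
  refine hvol.trans ?_
  gcongr
  exact htB.le

theorem IsConvexBody.volume_real_le_innerParallel_add_sum {ι : Type*} [Fintype ι]
    {D : ι → Set (Euc (k + 1))} (hM : IsConvexBody M) (hN : IsCompact N)
    (hDc : ∀ i, IsClosed (D i)) (hD : Metric.sphere 0 1 ⊆ ⋃ i, D i) (ht : 0 ≤ t) :
    volume.real M ≤ volume.real (innerParallel M N t) +
      ∑ i, volume.real (innerShell M (normalPts M (D i)) N t) := by
  have hQc (i) : IsCompact (innerShell M (normalPts M (D i)) N t) :=
    isCompact_innerShell hM.2.1 (hM.isCompact_normalPts (hDc i)) hN t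
  calc volume.real M
      ≤ volume.real (innerParallel M N t ∪ ⋃ i, innerShell M (normalPts M (D i)) N t) :=
        measureReal_mono (sdiff_subset_iff.1 (hM.diff_innerParallel_subset hD ht))
          ((isCompact_innerParallel hM.2.1 N t).union (isCompact_iUnion hQc)).measure_ne_top
    _ ≤ volume.real (innerParallel M N t) +
        volume.real (⋃ i, innerShell M (normalPts M (D i)) N t) := measureReal_union_le _ _
    _ ≤ _ := by
        gcongr
        exact measureReal_iUnion_fintype_le _

theorem IsConvexBody.eventually_volume_real_le_of_sum_lt {ι : Type*} [Fintype ι]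
    {u : ι → Euc (k + 1)} {E : ι → Set (Euc (k + 1))} (hM : IsConvexBody M) (hN : IsCompact N)
    (h0 : 0 ∈ N) (hR : N ⊆ Metric.closedBall 0 R) (hδ0 : 0 ≤ δ) (hδ1 : δ < 1)
    (hE : IsFinePartition (surfMeasure M) (Metric.sphere 0 1) δ u E)
    (hB : ∑ i, (supportFun N (u i) + δ * R) / (1 - δ) *
      (hausdorffFactor k * (surfMeasure M).real (E i)) < B) :
    ∀ᶠ t in 𝓝[>] (0 : ℝ), volume.real M ≤ volume.real (innerParallel M N t) + t * B := by
  obtain ⟨ε, hε, hεB⟩ : ∃ ε > 0, ∑ i, ((supportFun N (u i) + δ * R) / (1 - δ) *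
      (hausdorffFactor k * (surfMeasure M).real (E i)) + ε) < B := by
    have hc : ContinuousAt (fun ε : ℝ => ∑ i, ((supportFun N (u i) + δ * R) / (1 - δ) *
      (hausdorffFactor k * (surfMeasure M).real (E i)) + ε)) 0 := by fun_prop
    exact (hc.eventually_lt_const (by simpa using hB)).exists_gt
  have hshell (i) := hM.eventually_volume_real_innerShell_le (D := closure (E i)) hN h0 hR
    isClosed_closure (mem_sphere_zero_iff_norm.1 (hE.mem i)) hδ0 hδ1
    (closure_minimal (hE.subset_closedBall i) Metric.isClosed_closedBall) <| by
      rw [Measure.real, measure_closure_of_null_frontier (hE.measure_frontier i)]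
      exact lt_add_of_pos_right _ hε
  filter_upwards [Filter.eventually_all.2 hshell, self_mem_nhdsWithin] with t hle ht
  have ht0 : 0 ≤ t := le_of_lt ht
  calc volume.real M
      ≤ volume.real (innerParallel M N t) +
          ∑ i, volume.real (innerShell M (normalPts M (closure (E i))) N t) :=
        hM.volume_real_le_innerParallel_add_sum hN (fun _ => isClosed_closure)
          (hE.subset_iUnion.trans (iUnion_mono fun _ => subset_closure)) ht0
    _ ≤ volume.real (innerParallel M N t) + t * B := by
        gcongr
        refine (Finset.sum_le_sum fun i _ => hle i).trans ?_
        rw [← Finset.mul_sum]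
        gcongr
        exact hεB.le

theorem exists_pos_div_one_sub_mul_add_lt {a b c : ℝ} (h : a * b < B) :
    ∃ δ > 0, a / (1 - δ) * (b + δ * c) < B ∧ δ < 1 := by
  have hquot : ContinuousAt (fun δ : ℝ => a / (1 - δ)) 0 :=
    continuousAt_const.div (by fun_prop) (by norm_num)
  have hc : ContinuousAt (fun δ : ℝ => a / (1 - δ) * (b + δ * c)) 0 := by fun_prop
  exact ((hc.eventually_lt_const (by simpa using h)).and
    (eventually_lt_nhds zero_lt_one)).exists_gt

theorem IsConvexBody.eventually_volume_real_le_innerParallel_add (hM : IsConvexBody M)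
    (hN : IsCompact N) (h0 : 0 ∈ N) (hB : firstVariation M N < B) :
    ∀ᶠ t in 𝓝[>] (0 : ℝ), volume.real M ≤ volume.real (innerParallel M N t) + t * B := by
  have := hM.isFiniteMeasure_surfMeasure
  obtain ⟨R, hR⟩ := hN.isBounded.subset_closedBall 0
  have hR0 : 0 ≤ R := dist_nonneg.trans (hR h0)
  set S := (surfMeasure M).real univ
  obtain ⟨δ, hδ, hδB, hδ1⟩ : ∃ δ > 0, hausdorffFactor k / (1 - δ) *
      (∫ n, supportFun N n ∂surfMeasure M + δ * (2 * (R * S))) < B ∧ δ < 1 :=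
    exists_pos_div_one_sub_mul_add_lt hB
  obtain ⟨n, u, E, hE⟩ := exists_isFinePartition (surfMeasure M) (isCompact_sphere 0 1) hδ
  have hRiemann := abs_le.1 <| hE.abs_integral_sub_sum_le
    (hM.ae_norm_eq_one.mono fun n => mem_sphere_zero_iff_norm.2)
    (lipschitzWith_supportFun hN ⟨0, h0⟩ hR) (hM.integrable_supportFun hN ⟨0, h0⟩)
  rw [Real.coe_toNNReal R hR0] at hRiemann
  have hsum : ∑ i, (surfMeasure M).real (E i) ≤ S :=
    sum_measureReal_le_measureReal_univ (fun i _ => hE.measurableSet i)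
      (hE.pairwise_disjoint.set_pairwise _)
  refine hM.eventually_volume_real_le_of_sum_lt hN h0 hR hδ.le hδ1 hE (lt_of_le_of_lt ?_ hδB)
  calc ∑ i, (supportFun N (u i) + δ * R) / (1 - δ) *
        (hausdorffFactor k * (surfMeasure M).real (E i))
      = hausdorffFactor k / (1 - δ) * (∑ i, supportFun N (u i) * (surfMeasure M).real (E i) +
          δ * R * ∑ i, (surfMeasure M).real (E i)) := by
        rw [Finset.mul_sum, ← Finset.sum_add_distrib, Finset.mul_sum]
        exact Finset.sum_congr rfl fun i _ => by ring
    _ ≤ hausdorffFactor k / (1 - δ) *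
          ((∫ n, supportFun N n ∂surfMeasure M + R * δ * S) + δ * R * S) := by
        have : 0 ≤ 1 - δ := by linarith
        gcongr
        linarith
    _ = _ := by ring

end UpperBound

/-! ### Comparison of the volumes -/

section ConvexBody

variable {m : ℕ} {A B K L : Set (Euc m)} {a b t : ℝ}

theorem IsConvexBody.add (hK : IsConvexBody K) (hL : IsConvexBody L) : IsConvexBody (K + L) :=
  ⟨hK.1.add hL.1, hK.2.1.add hL.2.1,
    (hK.2.2.add (hL.2.2.mono interior_subset)).mono subset_interior_add_left⟩

theorem IsConvexBody.exists_closedBall_subset (hK : IsConvexBody K) :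
    ∃ v, ∃ ρ > 0, Metric.closedBall 0 ρ ⊆ {v} + K := by
  obtain ⟨x, hx⟩ := hK.2.2
  obtain ⟨ρ, hρ, hball⟩ := Metric.nhds_basis_closedBall.mem_iff.1 (mem_interior_iff_mem_nhds.1 hx)
  refine ⟨-x, ρ, hρ, fun y hy => ⟨-x, rfl, x + y, hball ?_, neg_add_cancel_left x y⟩⟩
  simpa using hy

theorem volume_real_singleton_add (x : Euc m) (A : Set (Euc m)) :
    volume.real ({x} + A) = volume.real A := by
  rw [singleton_add, image_add_left, measureReal_def, measure_preimage_add, measureReal_def]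

theorem volume_real_add_smul_singleton_add (A B : Set (Euc m)) (x : Euc m) (t : ℝ) :
    volume.real (A + t • ({x} + B)) = volume.real (A + t • B) := by
  rw [smul_add, smul_set_singleton, add_left_comm, volume_real_singleton_add]

theorem volume_real_smul {r : ℝ} (hr : 0 ≤ r) (A : Set (Euc m)) :
    volume.real (r • A) = r ^ m * volume.real A := by
  rw [measureReal_def, Measure.addHaar_smul_of_nonneg _ hr, ENNReal.toReal_mul,
    finrank_euclideanSpace_fin, ENNReal.toReal_ofReal (by positivity), measureReal_def]

theorem add_pow_le_volume_real_add (hA : IsCompact A) (hB : IsCompact B) (ha : 0 < a) (hb : 0 < b)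
    (hVA : volume.real A = a ^ m) (hVB : volume.real B = b ^ m) :
    (a + b) ^ m ≤ volume.real (A + B) := by
  have hscale {S : Set (Euc m)} {r : ℝ} (hr : 0 < r) (hS : IsCompact S)
      (hVS : volume.real S = r ^ m) :
      volume (((a + b) / r) • S) = ENNReal.ofReal ((a + b) ^ m) := by
    rw [← ofReal_measureReal (hS.smul _).measure_ne_top, volume_real_smul (by positivity), hVS,
      ← mul_pow, div_mul_cancel₀ _ hr.ne']
  have hab : a / (a + b) + b / (a + b) = 1 := by
    rw [← add_div, div_self (by positivity)]
  have hpos : 0 < (a + b) ^ m := by positivity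
  have hcancel {r : ℝ} (hr : 0 < r) : r / (a + b) * ((a + b) / r) = 1 := by field_simp
  have h := volume_rpow_mul_volume_rpow_le (by positivity) (by positivity) hab
    (hA.smul ((a + b) / a)) (hB.smul ((a + b) / b))
  rw [hscale ha hA hVA, hscale hb hB hVB,
    ← ENNReal.rpow_add _ _ (ENNReal.ofReal_pos.2 hpos).ne' ENNReal.ofReal_ne_top, hab,
    ENNReal.rpow_one, smul_smul, smul_smul, hcancel ha, hcancel hb, one_smul, one_smul] at h
  exact (ENNReal.ofReal_le_iff_le_toReal (hA.add hB).measure_ne_top).1 h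

theorem volume_real_add_smul_add_le (hK : IsConvexBody K) (hL : IsConvexBody L) (ht : 0 < t) :
    volume.real (K + t • (K + L)) + volume.real (L + t • (K + L)) + volume.real (K + L) ≤
      volume.real K + volume.real L + ((1 + t) ^ m + t ^ m) * volume.real (K + L) := by
  have hKL := hK.2.1.add hL.2.1
  have hK' := hK.2.1.measure_ne_top (μ := volume)
  have hL' := hL.2.1.measure_ne_top (μ := volume)
  have hKL' := hKL.measure_ne_top (μ := volume)
  have hKt := (hK.2.1.add (hKL.smul t)).measure_ne_top (μ := volume)
  have hLt := (hL.2.1.add (hKL.smul t)).measure_ne_top (μ := volume)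
  have h := ENNReal.toReal_mono (by finiteness) (volume_add_smul_add_le hK hL ht)
  rwa [ENNReal.toReal_add (by finiteness) hKL', ENNReal.toReal_add hKt hLt,
    ENNReal.toReal_add (by finiteness) (by finiteness), ENNReal.toReal_add hK' hL',
    ENNReal.toReal_mul, ENNReal.toReal_ofReal (by positivity)] at h

end ConvexBody

theorem exists_pos_eq_pow {n : ℕ} (hn : n ≠ 0) {x : ℝ} (hx : 0 < x) : ∃ a > 0, x = a ^ n :=
  ⟨x ^ (n⁻¹ : ℝ), Real.rpow_pos_of_pos hx _, (Real.rpow_inv_natCast_pow hx.le hn).symm⟩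

section Comparison

variable {k : ℕ} {K L M N : Set (Euc (k + 1))} {v : Euc (k + 1)} {a b ρ t A B : ℝ}

theorem add_mul_le_of_volume_real_innerParallel (hM : IsCompact M) (hN : IsCompact N) (hb : 0 < b)
    (ht : 0 < t) (hVM : volume.real M = a ^ (k + 1)) (hVN : volume.real N = b ^ (k + 1))
    (ha : 0 < a) {c : ℝ} (hc : 0 < c) (hVc : volume.real (innerParallel M N t) = c ^ (k + 1)) :
    c + t * b ≤ a := by
  refine (pow_le_pow_iff_left₀ (by positivity) ha.le k.succ_ne_zero).1 ?_
  calc (c + t * b) ^ (k + 1) ≤ volume.real (innerParallel M N t + t • N) := by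
        refine add_pow_le_volume_real_add (isCompact_innerParallel hM N t) (hN.smul t) hc
          (by positivity) hVc ?_
        rw [volume_real_smul ht.le, hVN, mul_pow]
    _ ≤ volume.real M := measureReal_mono (innerParallel_add_subset M N t) hM.measure_ne_top
    _ = a ^ (k + 1) := hVM

/-- Minkowski's first inequality. -/
theorem IsConvexBody.mul_pow_mul_le_firstVariation (hM : IsConvexBody M) (hN : IsCompact N)
    (h0 : 0 ∈ N) (ha : 0 < a) (hb : 0 < b) (hVM : volume.real M = a ^ (k + 1))
    (hVN : volume.real N = b ^ (k + 1)) : (k + 1) * a ^ k * b ≤ firstVariation M N := by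
  refine le_of_forall_gt_imp_ge_of_dense fun B hB => ?_
  have hlim : Filter.Tendsto (fun t : ℝ => (k + 1) * (a - t * b) ^ k * b) (𝓝[>] 0)
      (𝓝 ((k + 1) * a ^ k * b)) := by
    have hc : Continuous fun t : ℝ => (k + 1) * (a - t * b) ^ k * b := by fun_prop
    simpa using (hc.tendsto 0).mono_left nhdsWithin_le_nhds
  have hVpos : ∀ᶠ t in 𝓝[>] (0 : ℝ), t * B < volume.real M := by
    have hc : Continuous fun t : ℝ => t * B := by fun_prop
    exact (hc.continuousAt.eventually_lt_const (by simpa using hM.volume_real_pos)).filter_mono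
      nhdsWithin_le_nhds
  refine le_of_tendsto hlim ?_
  filter_upwards [hM.eventually_volume_real_le_innerParallel_add hN h0 hB, hVpos,
    self_mem_nhdsWithin] with t hle hpos (ht : 0 < t)
  obtain ⟨c, hc, hVc⟩ := exists_pos_eq_pow k.add_one_ne_zero
    (show 0 < volume.real (innerParallel M N t) by linarith)
  have hca : c ≤ a - t * b := le_sub_iff_add_le.2 <|
    add_mul_le_of_volume_real_innerParallel hM.2.1 hN hb ht hVM hVN ha hc hVc
  have hbernoulli : (a - t * b) ^ (k + 1) + (k + 1) * (a - t * b) ^ k * (t * b) ≤ a ^ (k + 1) := by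
    have : 0 < t * b := by positivity
    simpa using pow_add_mul_le_add_pow (a := a - t * b) (b := t * b) (by linarith) (by linarith)
      (k + 1)
  have hpow : c ^ (k + 1) ≤ (a - t * b) ^ (k + 1) := by gcongr
  refine le_of_mul_le_mul_left ?_ ht
  linear_combination hbernoulli + hpow + hle - hVM + hVc

theorem add_le_mul_of_eventually_add_mul_le (hk : k ≠ 0) (hK : IsConvexBody K)
    (hL : IsConvexBody L)
    (hA : ∀ᶠ t in 𝓝[>] (0 : ℝ), volume.real K + t * A ≤ volume.real (K + t • (K + L)))
    (hB : ∀ᶠ t in 𝓝[>] (0 : ℝ), volume.real L + t * B ≤ volume.real (L + t • (K + L))) :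
    A + B ≤ (k + 1) * volume.real (K + L) := by
  have hderiv : HasDerivAt (fun t : ℝ => ((1 + t) ^ (k + 1) + t ^ (k + 1)) * volume.real (K + L))
      ((k + 1) * volume.real (K + L)) 0 := by
    have hone : HasDerivAt (fun t : ℝ => 1 + t) 1 0 := (hasDerivAt_id 0).const_add 1
    simpa [hk] using ((hone.pow (k + 1)).add (hasDerivAt_pow (k + 1) (0 : ℝ))).mul_const
      (volume.real (K + L))
  refine ge_of_tendsto hderiv.tendsto_slope_zero_right ?_
  filter_upwards [hA, hB, self_mem_nhdsWithin] with t hA hB (ht : 0 < t)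
  have hvol := volume_real_add_smul_add_le hK hL ht
  rw [smul_eq_mul, ← div_eq_inv_mul, le_div_iff₀ ht]
  simp only [zero_add, add_zero, one_pow, zero_pow k.succ_ne_zero, one_mul]
  linarith

theorem firstVariation_add_firstVariation_le (hk : k ≠ 0) (hK : IsConvexBody K)
    (hL : IsConvexBody L) (hρ : 0 < ρ) (hρN : Metric.closedBall 0 ρ ⊆ {v} + (K + L)) :
    firstVariation K ({v} + (K + L)) + firstVariation L ({v} + (K + L)) ≤
      (k + 1) * volume.real (K + L) := by
  have hKL := hK.add hL
  have hlower {Q : Set (Euc (k + 1))} (hQ : IsConvexBody Q) {ε : ℝ} (hε : 0 < ε) :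
      ∀ᶠ t in 𝓝[>] (0 : ℝ), volume.real Q + t * (firstVariation Q ({v} + (K + L)) - ε) ≤
        volume.real (Q + t • (K + L)) := by
    simpa only [volume_real_add_smul_singleton_add] using
      hQ.eventually_add_mul_le_volume_real_add_smul (isCompact_singleton.add hKL.2.1)
        ((convex_singleton v).add hKL.1) hρ hρN (sub_lt_self _ hε)
  refine le_of_forall_pos_le_add fun ε hε => ?_
  have := add_le_mul_of_eventually_add_mul_le hk hK hL (hlower hK (half_pos hε))
    (hlower hL (half_pos hε))
  linarith

end Comparison

/-- the volume of the Blaschke sum never exceeds the volume of the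
Minkowski sum. -/
theorem vol_blaschke_le_vol_minkowski {m : ℕ} (hm : 2 ≤ m)
    (K L M : Set (Euc m)) (hK : IsConvexBody K) (hL : IsConvexBody L)
    (hM : IsConvexBody M)
    (hS : ∀ U : Set (Euc m), MeasurableSet U →
      surfMeasure M U = surfMeasure K U + surfMeasure L U) :
    volume M ≤ volume (K + L) := by
  obtain ⟨k, rfl⟩ : ∃ k, m = k + 1 := ⟨m - 1, by lia⟩
  have hKL := hK.add hL
  obtain ⟨v, ρ, hρ, hρN⟩ := hKL.exists_closedBall_subset
  have hN : IsCompact ({v} + (K + L)) := isCompact_singleton.add hKL.2.1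
  have h0 : 0 ∈ {v} + (K + L) := hρN (Metric.mem_closedBall_self hρ.le)
  obtain ⟨a, ha, hVM⟩ := exists_pos_eq_pow k.add_one_ne_zero hM.volume_real_pos
  obtain ⟨b, hb, hVKL⟩ := exists_pos_eq_pow k.add_one_ne_zero hKL.volume_real_pos
  have hpow : (k + 1) * b * a ^ k ≤ (k + 1) * b * b ^ k :=
    calc (k + 1) * b * a ^ k = (k + 1) * a ^ k * b := by ring
      _ ≤ firstVariation M ({v} + (K + L)) :=
        hM.mul_pow_mul_le_firstVariation hN h0 ha hb hVM
          ((volume_real_singleton_add v _).trans hVKL)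
      _ = firstVariation K ({v} + (K + L)) + firstVariation L ({v} + (K + L)) :=
        firstVariation_eq_add hK hL (Measure.ext hS) hN ⟨0, h0⟩
      _ ≤ (k + 1) * volume.real (K + L) :=
        firstVariation_add_firstVariation_le (by lia) hK hL hρ hρN
      _ = (k + 1) * b * b ^ k := by rw [hVKL]; ring
  have hab : a ≤ b :=
    (pow_le_pow_iff_left₀ ha.le hb.le (by lia)).1 (le_of_mul_le_mul_left hpow (by positivity))
  rw [← ENNReal.toReal_le_toReal hM.2.1.measure_ne_top hKL.2.1.measure_ne_top]
  exact hVM.trans_le ((pow_le_pow_left₀ ha.le hab _).trans_eq hVKL.symm)
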